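/- arXiv:2012.13654 — 2 statements merged into one kernel-verified Lean document; each statement's English description precedes it below -/
import Mathlib

section
/- Fix an integer N ≥ 1, k₀ ∈ ℂ with Re k₀ · Im k₀ > 0, and parameters r₁, …, r_N ∈ ℂ. For l ≥ 0 define f_l(x,t) := (1/l!) ∂_k^l [ e^{−2 i k² (x + 2 k² t)} ] |_{k = k₀}, and set f_m := 0 for m < 0; write f_m* for the complex conjugate of f_m(x,t). Define vectors η, η̃ ∈ ℂ^N by η_s = Σ_{j=s}^{N} r_j f_{j−s} and η̃_s = Σ_{j=s}^{N} (−1)^{s+1} r_j f_{j−s}, and N×N matrices Ω₁, Ω₂, Ω₃, Ω₄ with (s,p)-entries Ω₁[s,p] = −Σ_{j=s}^{N} Σ_{l=0}^{j−s} C(p+l−1, l) (−1)^l r_j* f_{j−s−l}* / (k₀* − k₀)^{l+p}, Ω₂[s,p] = −Σ_{j=s}^{N} Σ_{l=0}^{j−s} C(p+l−1, l) (−1)^l r_j* f_{j−s−l}* / (k₀* + k₀)^{l+p}, Ω₃[s,p] = Σ_{j=s}^{N} Σ_{l=0}^{j−s} C(p+l−1, l) (−1)^{s+l+1} r_j* f_{j−s−l}*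 / (k₀* − k₀)^{l+p}, Ω₄[s,p] = Σ_{j=s}^{N} Σ_{l=0}^{j−s} C(p+l−1, l) (−1)^{s+l+1} r_j* f_{j−s−l}* / (k₀* + k₀)^{l+p}. Let Ω be the 2N×2N block matrix [[Ω₁, Ω₂],[Ω₃, Ω₄]], let Ω* be its entrywise conjugate, I_σ = diag(I_N, −I_N), let B ∈ ℂ^{2N} be the column vector stacking η on top of −η̃, and let R ∈ ℂ^{1×2N} be the row vector (1,0,…,0,1,0,…,0) (i.e. two copies of (1,0,…,0) ∈ ℂ^{1×N}). Assume det(I_σ + Ω*Ω)(x,t) ≠ 0 for all (x,t) ∈ ℝ². Then the function q(x,t) = 2i [ det( I_σ + Ω*Ω + B R ) / det( I_σ + Ω*Ω ) − 1 ] satisfies the Gerdjikov–Ivanov equation i q_t + q_{xx} − i q² (q_x)* + (1/2) q³ (q*)² = 0 on ℝ². (This is the soliton corresponding to a single pole k₀ of order N with zero boundary conditions.) -/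
/-!
Write `N = n + 1`, let `J` be the lower Jordan block with eigenvalue `k₀`, `D` the diagonal matrix
of alternating signs, `P₀` the projection on the first coordinate, and `h` the Hankel matrix with
entries `η_{i+l+1}` (indices from 0), so that `η` is its first column. The blocks of `Ω` are
`± h̄ C` and `± h̄ C''`, up to left multiplication by `D`, where `C`, `C''` are the confluent Cauchy
matrices with differences `k̄₀ - k₀` and `k̄₀ + k₀`. Hence `Ω` factors through `N` dimensions, and
the equation `A z = B`, where `A = I_σ + Ω* Ω`, reduces to an `N × N` system `(1 - Ḡ H) y = η`, with
`z = (y, D y)`, `G = h̄ (C'' D - C)` and `H = h̄ (C + C'' D)`. The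
matrix determinant lemma then gives `q = 4 i y₀` (`red_main`).

Pascal's rule says that `C` and `C' = C'' D` satisfy `J̄ C - C Jᵀ = P₀` and `J̄ C' + C' Jᵀ = P₀`.
Consequently `E = (C - C') (Jᵀ)⁻¹ / 2` is skew-Hermitian, satisfies `2 J̄ E = C + C'`, and solves
`Lᴴ E - E L = P₀` with `L = (Jᵀ)²` (`eMat_rels`). In terms of `E` the matrix `1 - Ḡ H` becomes
`1 + a b` with `a = 2 h Ē`, `b = 2 L̄ h̄ E`. Since multiplication of a function by `k` acts on its
Hankel matrix of Taylor coefficients as `Jᵀ`, one has `h_x = -2 i L h` and `h_t = -4 i L² h`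
(`hankelMat_x`, `hankelMat_t`).

What remains is a direct computation with `U = (1 + a b)⁻¹ h P₀`. The Sylvester equation makes the
commutator of `L` with the resolvent of low rank, which yields closed formulas for `U_x`, `U_xx` and
`U_t` in terms of `W = (1 + a b)⁻¹ a L̄ h̄ P₀` and `V = L̄ h̄ P₀ - b W`. Symmetry of `h` and
skew-Hermitian symmetry of `E` express the corner entry of `V` through `U_x` and `|u|²` (`rel_V`),
and the GI equation for `q = 4 i u`, `u = U₀₀`, follows (`gi_abstract`).
-/

open Matrix Complex ComplexConjugate Finset

noncomputable section

/-- The Taylor coefficients f_l(x,t) = (1/l!) ∂_k^l e^{−2ik²(x+2k²t)} |_{k=k₀}. -/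
def flZBC (k₀ : ℂ) (l : ℕ) (x t : ℝ) : ℂ :=
  (1 / (Nat.factorial l) : ℂ) *
    iteratedDeriv l
      (fun k : ℂ => Complex.exp (-2 * Complex.I * k ^ 2 * ((x : ℂ) + 2 * k ^ 2 * (t : ℂ))))
      k₀

/-- η_s = Σ_{j=s}^N r_j f_{j−s}. -/
def etaZBC (N : ℕ) (k₀ : ℂ) (r : ℕ → ℂ) (s : ℕ) (x t : ℝ) : ℂ :=
  ∑ j ∈ Finset.Icc s N, r j * flZBC k₀ (j - s) x t

/-- η̃_s = Σ_{j=s}^N (−1)^{s+1} r_j f_{j−s}. -/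
def etaTildeZBC (N : ℕ) (k₀ : ℂ) (r : ℕ → ℂ) (s : ℕ) (x t : ℝ) : ℂ :=
  ∑ j ∈ Finset.Icc s N, (-1 : ℂ) ^ (s + 1) * r j * flZBC k₀ (j - s) x t

/-- The common double sum Σ_{j=s}^N Σ_{l=0}^{j−s} C(p+l−1,l)(−1)^l r_j* f_{j−s−l}* / d^{l+p}. -/
def omegaSumZBC (N : ℕ) (k₀ : ℂ) (r : ℕ → ℂ) (d : ℂ) (s p : ℕ) (x t : ℝ) : ℂ :=
  ∑ j ∈ Finset.Icc s N, ∑ l ∈ Finset.range (j - s + 1),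
    (Nat.choose (p + l - 1) l : ℂ) * (-1 : ℂ) ^ l * conj (r j) * conj (flZBC k₀ (j - s - l) x t)
      / d ^ (l + p)

/-- The 2N×2N block matrix Ω = [[Ω₁, Ω₂],[Ω₃, Ω₄]] (indices are 1-based in the blocks). -/
def OmegaZBC (N : ℕ) (k₀ : ℂ) (r : ℕ → ℂ) (x t : ℝ) :
    Matrix (Fin N ⊕ Fin N) (Fin N ⊕ Fin N) ℂ :=
  Matrix.fromBlocks
    (Matrix.of fun s p => -omegaSumZBC N k₀ r (conj k₀ - k₀) (s.1 + 1) (p.1 + 1) x t)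
    (Matrix.of fun s p => -omegaSumZBC N k₀ r (conj k₀ + k₀) (s.1 + 1) (p.1 + 1) x t)
    (Matrix.of fun s p =>
      (-1 : ℂ) ^ (s.1 + 2) * omegaSumZBC N k₀ r (conj k₀ - k₀) (s.1 + 1) (p.1 + 1) x t)
    (Matrix.of fun s p =>
      (-1 : ℂ) ^ (s.1 + 2) * omegaSumZBC N k₀ r (conj k₀ + k₀) (s.1 + 1) (p.1 + 1) x t)

/-- I_σ = diag(I_N, −I_N). -/
def IsigmaZBC (N : ℕ) : Matrix (Fin N ⊕ Fin N) (Fin N ⊕ Fin N) ℂ :=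
  Matrix.fromBlocks 1 0 0 (-1)

/-- The column vector B stacking η on top of −η̃. -/
def BvecZBC (N : ℕ) (k₀ : ℂ) (r : ℕ → ℂ) (x t : ℝ) : Fin N ⊕ Fin N → ℂ :=
  Sum.elim (fun s => etaZBC N k₀ r (s.1 + 1) x t)
    (fun s => -etaTildeZBC N k₀ r (s.1 + 1) x t)

/-- The row vector R = (1,0,…,0,1,0,…,0). -/
def RvecZBC (N : ℕ) : Fin N ⊕ Fin N → ℂ :=
  Sum.elim (fun s => if s.1 = 0 then 1 else 0) (fun s => if s.1 = 0 then 1 else 0)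

/-- A = I_σ + Ω*Ω, with Ω* the entrywise conjugate of Ω. -/
def AmatZBC (N : ℕ) (k₀ : ℂ) (r : ℕ → ℂ) (x t : ℝ) :
    Matrix (Fin N ⊕ Fin N) (Fin N ⊕ Fin N) ℂ :=
  IsigmaZBC N + (OmegaZBC N k₀ r x t).map (starRingEnd ℂ) * OmegaZBC N k₀ r x t

/-- The single high-order pole solution
q(x,t) = 2i[det(I_σ + Ω*Ω + BR)/det(I_σ + Ω*Ω) − 1]. -/
def qSolZBC (N : ℕ) (k₀ : ℂ) (r : ℕ → ℂ) (x t : ℝ) : ℂ :=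
  2 * Complex.I *
    ((AmatZBC N k₀ r x t + Matrix.vecMulVec (BvecZBC N k₀ r x t) (RvecZBC N)).det
      / (AmatZBC N k₀ r x t).det - 1)

/-! ### Noncommutative algebra behind the derivatives -/

section core
variable {R : Type*} [Ring R] [Algebra ℂ R] {L M P h k a b G : R}

/-- Commutation of `L` with the resolvent `G = (1 + a b)⁻¹`: since `a` and `b` intertwine `L` and
`M` up to the rank-one terms `h P` and `k P`, the commutator is a sum of two rank-one terms. -/
theorem core_comm (hLa : L * a = a * M + (2:ℂ) • (h * P)) (hMb : M * b = b * L + (2:ℂ) • (k * P))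
    (hGA : G * (1 + a * b) = 1) (hAG : (1 + a * b) * G = 1) :
    G * L = L * G + (2:ℂ) • (G * h * P * b * G) + (2:ℂ) • (G * a * k * P * G) := by
  have h1 : L * (1 + a * b) = (1 + a * b) * L + (2:ℂ) • (h * P * b) + (2:ℂ) • (a * k * P) := by
    have e1 : L * (a * b) = a * (M * b) + (2:ℂ) • (h * P * b) := by
      rw [← mul_assoc, hLa, add_mul, smul_mul_assoc, mul_assoc a]
    rw [mul_add, e1, hMb, mul_add, add_mul, mul_smul_comm]
    simp only [mul_assoc, mul_one, one_mul]
    abel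
  calc G * L = G * (L * (1 + a * b)) * G := by rw [mul_assoc, mul_assoc, hAG, mul_one]
    _ = _ := by
      rw [h1, mul_add, mul_add, ← mul_assoc G (1 + a * b), hGA, one_mul]
      simp only [add_mul, mul_smul_comm, smul_mul_assoc, mul_assoc]

theorem core_X (hLa : L * a = a * M + (2:ℂ) • (h * P)) (hMb : M * b = b * L + (2:ℂ) • (k * P))
    (hGA : G * (1 + a * b) = 1) (hAG : (1 + a * b) * G = 1) {U W : R}
    (hU : U = G * h * P) (hW : W = G * a * k * P) :
    G * L * h * P = L * U + (2:ℂ) • (U * b * U) + (2:ℂ) • (W * U) := by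
  rw [core_comm hLa hMb hGA hAG, hU, hW]
  simp only [add_mul, smul_mul_assoc, mul_assoc]

/-- Algebraic form of `U_x = c (L U + 2 W U)` for `U = G h P`; the left side is what the product
rule gives when `h`, `a` evolve by `c L` and `b` evolves by `-c M`. -/
theorem core_Ux (hLa : L * a = a * M + (2:ℂ) • (h * P)) (hMb : M * b = b * L + (2:ℂ) • (k * P))
    (hGA : G * (1 + a * b) = 1) (hAG : (1 + a * b) * G = 1) {U W : R}
    (hU : U = G * h * P) (hW : W = G * a * k * P) (c : ℂ) :
    -(G * (c • (L * a) * b + a * (-c • (M * b))) * G) * h * P + G * (c • (L * h)) * P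
      = c • (L * U + (2:ℂ) • (W * U)) := by
  have hX := core_X hLa hMb hGA hAG hU hW
  have e : c • (L * a) * b + a * (-c • (M * b)) = (2 * c) • (h * P * b) := by
    rw [hLa]
    simp only [add_mul, smul_add, mul_smul_comm, smul_mul_assoc, mul_assoc]
    module
  have e2 : G * (c • (L * h)) * P = c • (G * L * h * P) := by
    simp only [mul_smul_comm, smul_mul_assoc, mul_assoc]
  rw [e, e2, hX]
  have e3 : -(G * (2 * c) • (h * P * b) * G) * h * P = -((2 * c) • (U * b * U)) := by
    rw [hU]
    simp only [mul_smul_comm, smul_mul_assoc, mul_assoc, neg_mul]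
  rw [e3]
  module

/-- Algebraic form of `W_x = 2 c U V` with `V = k P - b W`. -/
theorem core_Wx (hLa : L * a = a * M + (2:ℂ) • (h * P))
    {U W : R}
    (hU : U = G * h * P) (hW : W = G * a * k * P) (c : ℂ) :
    (-(G * (c • (L * a) * b + a * (-c • (M * b))) * G) * a + G * (c • (L * a))) * k * P
      + G * a * (-c • (M * k)) * P
      = (2 * c) • (U * (k * P - b * W)) := by
  have e : c • (L * a) * b + a * (-c • (M * b)) = (2 * c) • (h * P * b) := by
    rw [hLa]
    simp only [add_mul, smul_add, mul_smul_comm, smul_mul_assoc, mul_assoc]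
    module
  rw [e, hLa, hU, hW]
  simp only [add_mul, mul_add, mul_sub, smul_add, smul_sub, mul_smul_comm, smul_mul_assoc,
    mul_assoc, neg_mul, neg_smul, mul_neg]
  module

/-- Algebraic form of `U_t`, where `h`, `a` evolve by `d L²` and `b` by `-d M²`. -/
theorem core_Ut (hLa : L * a = a * M + (2:ℂ) • (h * P)) (hMb : M * b = b * L + (2:ℂ) • (k * P))
    (hGA : G * (1 + a * b) = 1) (hAG : (1 + a * b) * G = 1) {U W : R}
    (hU : U = G * h * P) (hW : W = G * a * k * P) (d : ℂ) :
    -(G * (d • (L * (L * a)) * b + a * (-d • (M * (M * b)))) * G) * h * P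
        + G * (d • (L * (L * h))) * P
      = d • (L * (L * U + (2:ℂ) • (W * U)) + (2:ℂ) • (W * (L * U + (2:ℂ) • (W * U)))
          - (4:ℂ) • (U * (k * P - b * W) * U)) := by
  have hX := core_X hLa hMb hGA hAG hU hW
  have hC := core_comm hLa hMb hGA hAG
  have e : d • (L * (L * a)) * b + a * (-d • (M * (M * b)))
      = (2 * d) • (h * P * (M * b)) + (2 * d) • (L * h * P * b) := by
    rw [hLa, mul_add, ← mul_assoc L a M, hLa]
    simp only [add_mul, smul_add, mul_smul_comm, smul_mul_assoc, mul_assoc]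
    module
  have e2 : G * (d • (L * (L * h))) * P = d • (L * (G * L * h * P)
      + (2:ℂ) • (U * b * (G * L * h * P)) + (2:ℂ) • (W * (G * L * h * P))) := by
    have : G * (d • (L * (L * h))) * P = d • ((G * L) * (L * (h * P))) := by
      simp only [mul_smul_comm, smul_mul_assoc, mul_assoc]
    have h3 : (G * L) * (L * (h * P)) = (L * G + (2:ℂ) • (G * h * P * b * G)
        + (2:ℂ) • (G * a * k * P * G)) * (L * (h * P)) := by rw [← hC]
    rw [this, h3, hU, hW]
    simp only [add_mul, smul_mul_assoc, mul_assoc]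
  have e3 : -(G * ((2 * d) • (h * P * (M * b)) + (2 * d) • (L * h * P * b)) * G) * h * P
      = -((2 * d) • (U * (b * L + (2:ℂ) • (k * P)) * U)) - (2 * d) • ((G * L * h * P) * b * U) := by
    rw [← hMb, hU]
    simp only [mul_add, add_mul, mul_smul_comm, smul_mul_assoc, mul_assoc, neg_mul]
    module
  rw [e, e2, e3, hX]
  simp only [add_mul, mul_add, mul_sub, sub_mul, smul_add, smul_sub, mul_smul_comm,
    smul_mul_assoc, mul_assoc]
  module
end core

/-! ### Derivatives in a Banach algebra -/

section an
variable {R : Type*} [NormedRing R] [CompleteSpace R] [NormedAlgebra ℂ R]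

theorem hasDerivAt_inv' {A : ℝ → R} {A' : R} {x : ℝ} (hA : HasDerivAt A A' x)
    (hu : IsUnit (A x)) :
    HasDerivAt (fun y => Ring.inverse (A y))
      (-(Ring.inverse (A x) * A' * Ring.inverse (A x))) x := by
  obtain ⟨u, hu⟩ := hu
  have h1 := hasFDerivAt_ringInverse (𝕜 := ℝ) u
  rw [hu] at h1
  have := h1.comp_hasDerivAt x hA
  simpa [← hu, Function.comp_def] using this

variable {L M P : R} {h k a b : ℝ → R} {x : ℝ} {c : ℂ}

theorem hasDerivAt_U (hh : HasDerivAt h (c • (L * h x)) x) (ha : HasDerivAt a (c • (L * a x)) x)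
    (hb : HasDerivAt b (-c • (M * b x)) x)
    (hu : IsUnit (1 + a x * b x))
    (hLa : L * a x = a x * M + (2:ℂ) • (h x * P)) (hMb : M * b x = b x * L + (2:ℂ) • (k x * P))
    {U W : ℝ → R} (hU : ∀ y, U y = Ring.inverse (1 + a y * b y) * h y * P)
    (hW : ∀ y, W y = Ring.inverse (1 + a y * b y) * a y * k y * P) :
    HasDerivAt U (c • (L * U x + (2:ℂ) • (W x * U x))) x := by
  have hG := hasDerivAt_inv' ((ha.mul hb).const_add 1) hu
  have hd := (hG.mul hh).mul_const P
  refine (hd.congr_of_eventuallyEq (.of_forall hU)).congr_deriv (Eq.trans ?_ (core_Ux hLa hMb (Ring.inverse_mul_cancel _ hu)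
    (Ring.mul_inverse_cancel _ hu) (hU x) (hW x) c))
  simp only [Pi.mul_apply, add_mul]

theorem hasDerivAt_W (ha : HasDerivAt a (c • (L * a x)) x)
    (hb : HasDerivAt b (-c • (M * b x)) x) (hk : HasDerivAt k (-c • (M * k x)) x)
    (hu : IsUnit (1 + a x * b x))
    (hLa : L * a x = a x * M + (2:ℂ) • (h x * P)) 
    {U W : ℝ → R} (hU : ∀ y, U y = Ring.inverse (1 + a y * b y) * h y * P)
    (hW : ∀ y, W y = Ring.inverse (1 + a y * b y) * a y * k y * P) :
    HasDerivAt W ((2 * c) • (U x * (k x * P - b x * W x))) x := by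
  have hG := hasDerivAt_inv' ((ha.mul hb).const_add 1) hu
  have hd := ((hG.mul ha).mul hk).mul_const P
  refine (hd.congr_of_eventuallyEq (.of_forall hW)).congr_deriv (Eq.trans ?_ (core_Wx hLa (hU x) (hW x) c))
  simp only [Pi.mul_apply, add_mul]

theorem hasDerivAt_Ut (hh : HasDerivAt h (c • (L * (L * h x))) x)
    (ha : HasDerivAt a (c • (L * (L * a x))) x)
    (hb : HasDerivAt b (-c • (M * (M * b x))) x)
    (hu : IsUnit (1 + a x * b x))
    (hLa : L * a x = a x * M + (2:ℂ) • (h x * P)) (hMb : M * b x = b x * L + (2:ℂ) • (k x * P))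
    {U W : ℝ → R} (hU : ∀ y, U y = Ring.inverse (1 + a y * b y) * h y * P)
    (hW : ∀ y, W y = Ring.inverse (1 + a y * b y) * a y * k y * P) :
    HasDerivAt U (c • (L * (L * U x + (2:ℂ) • (W x * U x))
      + (2:ℂ) • (W x * (L * U x + (2:ℂ) • (W x * U x)))
          - (4:ℂ) • (U x * (k x * P - b x * W x) * U x))) x := by
  have hG := hasDerivAt_inv' ((ha.mul hb).const_add 1) hu
  have hd := (hG.mul hh).mul_const P
  refine (hd.congr_of_eventuallyEq (.of_forall hU)).congr_deriv (Eq.trans ?_ (core_Ut hLa hMb (Ring.inverse_mul_cancel _ hu)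
    (Ring.mul_inverse_cancel _ hu) (hU x) (hW x) c))
  simp only [Pi.mul_apply, add_mul]

end an

section an2
variable {R : Type*} [NormedRing R] [NormedAlgebra ℂ R] {L : R} {x : ℝ} {c : ℂ}

/-- The second `x`-derivative of `U`; it shares its leading part with `U_t` and differs from it in
the sign of the term `4 U V U`. -/
theorem hasDerivAt_Uxx {U W V : ℝ → R}
    (hU : HasDerivAt U (c • (L * U x + (2:ℂ) • (W x * U x))) x)
    (hW : HasDerivAt W ((2 * c) • (U x * V x)) x) :
    HasDerivAt (fun y => c • (L * U y + (2:ℂ) • (W y * U y)))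
      ((c ^ 2) • (L * (L * U x + (2:ℂ) • (W x * U x))
      + (2:ℂ) • (W x * (L * U x + (2:ℂ) • (W x * U x)))
          + (4:ℂ) • (U x * V x * U x))) x := by
  have h2 := (((hU.const_mul L).add ((hW.mul hU).const_smul (2:ℂ))).const_smul c)
  refine h2.congr_deriv ?_
  simp only [smul_mul_assoc, mul_smul_comm, smul_add, mul_add]
  module
end an2

/-! ### Entrywise conjugation and the closing symmetry -/

section entrywise
open Matrix
variable {n : ℕ}

/-- The entrywise complex conjugate of a matrix. -/
def cj {m m' : Type*} (X : Matrix m m' ℂ) : Matrix m m' ℂ := X.map (starRingEnd ℂ)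

theorem cj_mul {m m' m'' : Type*} [Fintype m'] (X : Matrix m m' ℂ) (Y : Matrix m' m'' ℂ) :
    cj (X * Y) = cj X * cj Y := Matrix.map_mul
theorem cj_add {m m' : Type*} (X Y : Matrix m m' ℂ) : cj (X + Y) = cj X + cj Y := by
  ext; simp [cj]
theorem cj_sub {m m' : Type*} (X Y : Matrix m m' ℂ) : cj (X - Y) = cj X - cj Y := by
  ext; simp [cj]
theorem cj_neg {m m' : Type*} (X : Matrix m m' ℂ) : cj (-X) = -cj X := by
  ext; simp [cj]
theorem cj_cj {m m' : Type*} (X : Matrix m m' ℂ) : cj (cj X) = X := by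
  ext; simp [cj]
theorem cj_one {m : Type*} [DecidableEq m] : cj (1 : Matrix m m ℂ) = 1 := by
  simp [cj]
theorem cj_two_smul {m m' : Type*} (X : Matrix m m' ℂ) : cj ((2:ℂ) • X) = (2:ℂ) • cj X := by
  ext i j
  simp only [cj, map_apply, Matrix.smul_apply, smul_eq_mul, map_mul, map_ofNat]
theorem cj_transpose {m m' : Type*} (X : Matrix m m' ℂ) : (cj X)ᵀ = Xᴴ := rfl
theorem cj_apply {m m' : Type*} (X : Matrix m m' ℂ) (i : m) (j : m') :
    cj X i j = starRingEnd ℂ (X i j) := rfl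

theorem cj_conjTranspose {m m' : Type*} (X : Matrix m m' ℂ) : cj Xᴴ = Xᵀ := by
  ext; simp [cj]
theorem cj_transpose' {m m' : Type*} (X : Matrix m m' ℂ) : cj Xᵀ = Xᴴ := rfl

/-- The rank-one projection onto the first coordinate vector. -/
abbrev P0 (n : ℕ) : Matrix (Fin (n+1)) (Fin (n+1)) ℂ := Matrix.single 0 0 1

theorem cj_P0 : cj (P0 n) = P0 n := by
  ext i j; simp [cj, Matrix.single_apply]

theorem mul_P0_apply (X : Matrix (Fin (n+1)) (Fin (n+1)) ℂ) : (X * P0 n) 0 0 = X 0 0 := by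
  simp

/-- If only the first column of `X` is nonzero, the corner entry of `X Y` is a product of corner
entries. -/
theorem col_mul_apply {X Y : Matrix (Fin (n+1)) (Fin (n+1)) ℂ} (Z) (hX : X = Z * P0 n) :
   (X * Y) 0 0 = X 0 0 * Y 0 0 := by
  have : X * Y = Z * P0 n * P0 n * Y := by
    rw [hX, mul_assoc Z (P0 n) (P0 n)]; simp
  rw [this, hX, mul_assoc _ (P0 n) Y, Matrix.mul_apply, Finset.sum_eq_single 0]
  · simp
  · intro b _ hb
    simp [Matrix.mul_apply, Ne.symm hb]
  · simp

variable {L E h : Matrix (Fin (n+1)) (Fin (n+1)) ℂ}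

theorem rel_La (hL : L * h = h * Lᵀ) (hS : Lᴴ * E - E * L = P0 n) :
    L * ((2:ℂ) • (h * cj E)) = ((2:ℂ) • (h * cj E)) * cj L + (2:ℂ) • (h * P0 n) := by
  have h1 : Lᵀ * cj E - cj E * cj L = P0 n := by
    have := congrArg cj hS
    rwa [cj_sub, cj_mul, cj_mul, cj_conjTranspose, cj_P0] at this
  rw [← h1, mul_smul_comm, ← mul_assoc, hL]
  simp only [mul_sub, smul_mul_assoc, mul_assoc]
  module

theorem rel_k (hL : L * h = h * Lᵀ) : cj L * cj h = cj h * Lᴴ := by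
  rw [← cj_mul, hL, cj_mul, cj_transpose']

theorem rel_Mb (hL : L * h = h * Lᵀ) (hS : Lᴴ * E - E * L = P0 n) :
    cj L * ((2:ℂ) • (cj L * cj h * E))
      = ((2:ℂ) • (cj L * cj h * E)) * L + (2:ℂ) • (cj L * cj h * P0 n) := by
  rw [← hS]
  have e : cj L * (cj L * (cj h * E)) = cj L * (cj h * (Lᴴ * E)) := by
    rw [← mul_assoc (cj L) (cj h), rel_k hL, mul_assoc]
  simp only [mul_sub, smul_mul_assoc, mul_smul_comm, mul_assoc, e]
  module

/-- The conjugation symmetry that closes the system: with `U`, `W` as in `core_Ux`, `core_Wx`, and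
`u`, `w`, `v` the corner entries of `U`, `W`, `V = k P₀ - b W`, one has
`v = conj ((L U)₀₀ + 2 w u) + 4 u ū²`. -/
theorem rel_V (hT : hᵀ = h) (hL : L * h = h * Lᵀ) (hE : Eᴴ = -E)
    (hS : Lᴴ * E - E * L = P0 n) {a b k A G U W : Matrix (Fin (n+1)) (Fin (n+1)) ℂ}
    (ha : a = (2:ℂ) • (h * cj E)) (hb : b = (2:ℂ) • (cj L * cj h * E)) (hk : k = cj L * cj h)
    (hA : A = 1 + a * b) (hGA : G * A = 1) (hAG : A * G = 1)
    (hU : U = G * h * P0 n) (hW : W = G * a * k * P0 n) :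
    (k * P0 n - b * W) 0 0 = starRingEnd ℂ ((L * U) 0 0 + 2 * (W 0 0 * U 0 0))
      + 4 * U 0 0 * (starRingEnd ℂ (U 0 0)) ^ 2 := by
  set V := k * P0 n - b * W with hV
  have hLa : L * a = a * cj L + (2:ℂ) • (h * P0 n) := ha ▸ rel_La hL hS
  have hMb : cj L * b = b * L + (2:ℂ) • (k * P0 n) := by rw [hb, hk]; exact rel_Mb hL hS
  have hkL := rel_k hL
  have hX := core_X hLa hMb (hA ▸ hGA) (hA ▸ hAG) hU hW
  have hEt : Eᵀ = - cj E := by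
    have := congrArg cj hE
    rwa [cj_conjTranspose, cj_neg] at this
  have hEt' : (cj E)ᵀ = - E := by rw [cj_transpose, hE]
  have hhH : hᴴ = cj h := by rw [← cj_transpose', hT]
  have hht : (cj h)ᵀ = cj h := by rw [cj_transpose, hhH]
  have hkt : (cj L * cj h)ᵀ = cj L * cj h := by
    rw [transpose_mul, hht, cj_transpose, hkL]
  have hAU : A * U = h * P0 n := by
    rw [hU, ← mul_assoc, ← mul_assoc, hAG, one_mul]
  have hAW : A * W = a * k * P0 n := by
    rw [hW, ← mul_assoc, ← mul_assoc, ← mul_assoc, hAG, one_mul]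
  have haV : a * V = W := by
    have : a * b * W = A * W - W := by rw [hA, add_mul, one_mul]; abel
    rw [hV, mul_sub, ← mul_assoc, ← mul_assoc, this, hAW]; abel
  -- Conjugating `1 + a b` gives `1 + b a` up to a rank-one term, which links `V` to `conj (G L h P)`.
  have hGA' : cj G * cj A = 1 := by rw [← cj_mul, hGA, cj_one]
  have hAc : 1 + b * a = cj A + (2:ℂ) • (cj h * P0 n * a) := by
    rw [hA, ← hS, cj_add, cj_one, cj_mul, ha, hb]
    simp only [cj_two_smul, cj_mul, cj_cj, hkL]
    have e : ∀ X, h * (Lᵀ * X) = L * (h * X) := fun X => by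
      rw [← mul_assoc, ← hL, mul_assoc]
    simp only [mul_sub, sub_mul, smul_mul_assoc, mul_smul_comm, mul_assoc, cj_conjTranspose, e]
    module
  have h1 : V + (2:ℂ) • (cj U * W) = cj (G * L * h * P0 n) := by
    have e1 : (1 + b * a) * V = k * P0 n := by
      rw [add_mul, one_mul, mul_assoc, haV, hV]; abel
    have e2 : cj A * V = k * P0 n - (2:ℂ) • (cj h * P0 n * W) := by
      rw [← e1, hAc, add_mul, smul_mul_assoc, mul_assoc _ a V, haV]; abel
    have e3 : V = cj G * (cj A * V) := by rw [← mul_assoc, hGA', one_mul]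
    rw [e3, e2, hU, hk]
    simp only [cj_mul, cj_P0, mul_sub, mul_smul_comm, mul_assoc]
    abel
  rw [hX] at h1
  have h2 := congrFun (congrFun h1 0) 0
  rw [cj_apply] at h2
  have hcU : cj U = (cj G * cj h) * P0 n := by rw [hU, cj_mul, cj_mul, cj_P0]
  have e1 : (cj U * W) 0 0 = starRingEnd ℂ (U 0 0) * W 0 0 := col_mul_apply _ hcU
  have e2 : (U * b * U) 0 0 = U 0 0 * (b * U) 0 0 := by
    rw [mul_assoc]; exact col_mul_apply _ hU
  have e3 : (W * U) 0 0 = W 0 0 * U 0 0 := col_mul_apply _ hW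
  simp only [Matrix.add_apply, Matrix.smul_apply, e1, e2, e3, smul_eq_mul, map_add, map_mul] at h2
  -- Symmetry of `h` gives `(b U)₀₀ = -w`; the Sylvester equation gives its real
  -- part, `|u|²`.
  have s1 : (b * U) 0 0 = - W 0 0 := by
    have hAh : A * h = h * Aᵀ := by
      rw [hA, ha, hb]
      simp only [transpose_add, transpose_one, transpose_mul, transpose_smul, hEt, hEt', hT, hkt]
      simp only [add_mul, mul_add, one_mul, mul_one, smul_mul_assoc, mul_smul_comm, mul_assoc, neg_mul, mul_neg, neg_neg, smul_neg]
    have hGh : h * Gᵀ = G * h := by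
      have hAGt : Aᵀ * Gᵀ = 1 := by rw [← transpose_mul, hGA, transpose_one]
      calc h * Gᵀ = G * (A * h) * Gᵀ := by rw [← mul_assoc, hGA, one_mul]
        _ = G * h := by rw [hAh, mul_assoc, mul_assoc, hAGt, mul_one]
    have : (b * (G * h))ᵀ = -(G * a * k) := by
      rw [transpose_mul, transpose_mul, hT, hGh, hb, ha, hk, transpose_smul, transpose_mul, hkt, hEt]
      simp only [smul_mul_assoc, mul_smul_comm, mul_assoc, neg_mul, mul_neg, smul_neg]
    rw [hU, hW, ← mul_assoc, mul_P0_apply, mul_P0_apply]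
    exact congrFun (congrFun this 0) 0
  have s2 : (b * U) 0 0 + starRingEnd ℂ ((b * U) 0 0) = 2 * (starRingEnd ℂ (U 0 0) * U 0 0) := by
    have hPH : (P0 n)ᴴ = P0 n := by simp [P0]
    have f1 : P0 n * (b * U) = (2:ℂ) • (Uᴴ * Aᴴ * Lᴴ * E * U) := by
      have : P0 n * cj h = Uᴴ * Aᴴ := by
        rw [← conjTranspose_mul, hAU, conjTranspose_mul, hPH, hhH]
      rw [← this, hb, hkL]
      simp only [smul_mul_assoc, mul_smul_comm, mul_assoc]
    have f2 : (P0 n * (b * U))ᴴ = -((2:ℂ) • (Uᴴ * E * L * A * U)) := by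
      rw [f1, conjTranspose_smul]
      simp only [conjTranspose_mul, conjTranspose_conjTranspose, hE, mul_assoc]
      simp
    have f3 : Aᴴ * Lᴴ * E - E * L * A = P0 n := by
      rw [← hS, hA, ha, hb, hkL]
      have q1 : (cj E)ᴴ = -cj E := by rw [← cj_transpose', hEt', cj_neg]
      have q2 : (cj h)ᴴ = h := by rw [← cj_transpose', hht, cj_cj]
      simp only [conjTranspose_add, conjTranspose_one, conjTranspose_mul, conjTranspose_smul, hE, q1, q2,
         hhH, conjTranspose_conjTranspose]
      simp only [add_mul, mul_add, one_mul, mul_one, smul_mul_assoc, mul_smul_comm, mul_assoc, neg_mul, mul_neg, neg_neg, smul_neg]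
      simp
    have f4 : P0 n * (b * U) + (P0 n * (b * U))ᴴ = (2:ℂ) • (Uᴴ * P0 n * U) := by
      rw [f2, f1, ← f3]
      simp only [mul_sub, sub_mul, mul_assoc]
      module
    have f5 := congrFun (congrFun f4 0) 0
    have f6 : (Uᴴ * P0 n * U) 0 0 = starRingEnd ℂ (U 0 0) * U 0 0 := by
      rw [col_mul_apply _ rfl, mul_P0_apply]; simp
    rw [Matrix.add_apply, Matrix.smul_apply, f6, conjTranspose_apply] at f5
    simpa using f5
  have s3 : starRingEnd ℂ ((b * U) 0 0) = 2 * (starRingEnd ℂ (U 0 0) * U 0 0) + W 0 0 := by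
    rw [← s2, s1]; ring
  rw [s3] at h2
  simp only [map_ofNat, map_add, map_mul] at h2 ⊢
  linear_combination h2
end entrywise

/-! ### The GI equation from the abstract data -/

section gi
open Matrix
open scoped Matrix.Norms.Operator
variable {n : ℕ}

theorem hasDerivAt_entry {F : ℝ → Matrix (Fin (n+1)) (Fin (n+1)) ℂ}
    {F' : Matrix (Fin (n+1)) (Fin (n+1)) ℂ} {x : ℝ} (hF : HasDerivAt F F' x) :
    HasDerivAt (fun y => F y 0 0) (F' 0 0) x :=
  ((Matrix.entryLinearMap ℝ ℂ (0 : Fin (n+1)) (0 : Fin (n+1))).toContinuousLinearMap.hasFDerivAt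
    (x := F x)).comp_hasDerivAt x hF

theorem hasDerivAt_cj {F : ℝ → Matrix (Fin (n+1)) (Fin (n+1)) ℂ}
    {F' : Matrix (Fin (n+1)) (Fin (n+1)) ℂ} {x : ℝ} (hF : HasDerivAt F F' x) :
    HasDerivAt (fun y => cj (F y)) (cj F') x := by
  let T : Matrix (Fin (n+1)) (Fin (n+1)) ℂ →ₗ[ℝ] Matrix (Fin (n+1)) (Fin (n+1)) ℂ :=
    { toFun := cj
      map_add' := cj_add
      map_smul' := fun r X => by ext i j; simp [cj] }
  exact (T.toContinuousLinearMap.hasFDerivAt (x := F x)).comp_hasDerivAt x hF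

theorem cj_smul {m m' : Type*} (c : ℂ) (X : Matrix m m' ℂ) :
    cj (c • X) = (starRingEnd ℂ c) • cj X := by
  ext; simp [cj]

theorem conj_neg_two_I : starRingEnd ℂ (-2 * Complex.I) = -(-2 * Complex.I) := by
  simp only [map_mul, map_neg, map_ofNat, Complex.conj_I]; ring

theorem conj_neg_four_I : starRingEnd ℂ (-4 * Complex.I) = -(-4 * Complex.I) := by
  simp only [map_mul, map_neg, map_ofNat, Complex.conj_I]; ring

/-- The GI equation for `q = 4 i u`, once its derivatives are expressed through `u`, `v`, `w`, the
corner entry `ℓ` of `L U` and the common leading part `z` of `U_t` and `U_xx`. -/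
theorem gi_scalar {u w v z ℓ : ℂ}
    (hv : v = starRingEnd ℂ (ℓ + 2 * (w * u)) + 4 * u * (starRingEnd ℂ u) ^ 2) :
    Complex.I * (4 * Complex.I * (-4 * Complex.I * (z - 4 * (u * v * u))))
        + 4 * Complex.I * ((-2 * Complex.I) ^ 2 * (z + 4 * (u * v * u)))
        - Complex.I * (4 * Complex.I * u) ^ 2 *
          starRingEnd ℂ (4 * Complex.I * (-2 * Complex.I * (ℓ + 2 * (w * u))))
        + (1 / 2) * (4 * Complex.I * u) ^ 3 * (starRingEnd ℂ (4 * Complex.I * u)) ^ 2 = 0 := by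
  rw [hv]
  simp only [map_mul, map_add, map_neg, Complex.conj_I, map_ofNat]
  ring_nf
  simp only [show Complex.I ^ 5 = Complex.I by
      rw [show 5 = 4 + 1 from rfl, pow_succ, Complex.I_pow_four, one_mul],
    show Complex.I ^ 3 = - Complex.I by rw [pow_succ, Complex.I_sq]; ring]
  ring

/-- Any symmetric matrix function `h` with `h_x = -2 i L h`, `h_t = -4 i L² h` and `L h = h Lᵀ`,
together with a skew-Hermitian solution `E` of the Sylvester equation `Lᴴ E - E L = P₀`, gives a
solution of the GI equation. -/
theorem gi_abstract {L E : Matrix (Fin (n+1)) (Fin (n+1)) ℂ}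
    {h : ℝ → ℝ → Matrix (Fin (n+1)) (Fin (n+1)) ℂ}
    (hT : ∀ x t, (h x t)ᵀ = h x t) (hL : ∀ x t, L * h x t = h x t * Lᵀ) (hE : Eᴴ = -E)
    (hS : Lᴴ * E - E * L = P0 n)
    (hx : ∀ x t, HasDerivAt (fun s => h s t) ((-2 * Complex.I) • (L * h x t)) x)
    (ht : ∀ x t, HasDerivAt (fun s => h x s) ((-4 * Complex.I) • (L * (L * h x t))) t)
    (hu : ∀ x t, IsUnit (1 + ((2:ℂ) • (h x t * cj E)) * ((2:ℂ) • (cj L * cj (h x t) * E))))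
    {q : ℝ → ℝ → ℂ}
    (hq : ∀ x t, q x t = 4 * Complex.I *
      (Ring.inverse (1 + ((2:ℂ) • (h x t * cj E)) * ((2:ℂ) • (cj L * cj (h x t) * E)))
        * h x t * P0 n) 0 0) (x t : ℝ) :
    Complex.I * deriv (fun s => q x s) t
        + deriv (fun s => deriv (fun s' => q s' t) s) x
        - Complex.I * (q x t) ^ 2 * starRingEnd ℂ (deriv (fun s => q s t) x)
        + (1 / 2) * (q x t) ^ 3 * (starRingEnd ℂ (q x t)) ^ 2 = 0 := by
  obtain ⟨a, ha⟩ : ∃ a : ℝ → ℝ → Matrix (Fin (n+1)) (Fin (n+1)) ℂ,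
    ∀ x t, a x t = (2:ℂ) • (h x t * cj E) := ⟨_, fun _ _ => rfl⟩
  obtain ⟨k, hk⟩ : ∃ k : ℝ → ℝ → Matrix (Fin (n+1)) (Fin (n+1)) ℂ,
    ∀ x t, k x t = cj L * cj (h x t) := ⟨_, fun _ _ => rfl⟩
  obtain ⟨b, hb⟩ : ∃ b : ℝ → ℝ → Matrix (Fin (n+1)) (Fin (n+1)) ℂ,
    ∀ x t, b x t = (2:ℂ) • (cj L * cj (h x t) * E) := ⟨_, fun _ _ => rfl⟩
  obtain ⟨U, hU⟩ : ∃ U : ℝ → ℝ → Matrix (Fin (n+1)) (Fin (n+1)) ℂ,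
    ∀ x t, U x t = Ring.inverse (1 + a x t * b x t) * h x t * P0 n := ⟨_, fun _ _ => rfl⟩
  obtain ⟨W, hW⟩ : ∃ W : ℝ → ℝ → Matrix (Fin (n+1)) (Fin (n+1)) ℂ,
    ∀ x t, W x t = Ring.inverse (1 + a x t * b x t) * a x t * k x t * P0 n := ⟨_, fun _ _ => rfl⟩
  obtain ⟨V, hV⟩ : ∃ V : ℝ → ℝ → Matrix (Fin (n+1)) (Fin (n+1)) ℂ,
    ∀ x t, V x t = k x t * P0 n - b x t * W x t := ⟨_, fun _ _ => rfl⟩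
  simp only [← ha, ← hb, ← hU] at hu hq
  have hLa : ∀ x t, L * a x t = a x t * cj L + (2:ℂ) • (h x t * P0 n) := fun x t => by
    rw [ha]; exact rel_La (hL x t) hS
  have hMb : ∀ x t, cj L * b x t = b x t * L + (2:ℂ) • (k x t * P0 n) := fun x t => by
    rw [hb, hk]; exact rel_Mb (hL x t) hS
  have hbx : ∀ x t, HasDerivAt (fun s => b s t) (-(-2 * Complex.I) • (cj L * b x t)) x := by
    intro x t
    rw [show (fun s => b s t) = fun s => (2:ℂ) • (cj L * cj (h s t) * E) from
      funext fun s => hb s t]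
    refine ((((hasDerivAt_cj (hx x t)).const_mul (cj L)).mul_const E).const_smul (2:ℂ)).congr_deriv ?_
    rw [hb, cj_smul, cj_mul, conj_neg_two_I]
    simp only [smul_mul_assoc, mul_smul_comm, mul_assoc]
    module
  have hkx : ∀ x t, HasDerivAt (fun s => k s t) (-(-2 * Complex.I) • (cj L * k x t)) x := by
    intro x t
    rw [show (fun s => k s t) = fun s => cj L * cj (h s t) from
      funext fun s => hk s t]
    refine ((hasDerivAt_cj (hx x t)).const_mul (cj L)).congr_deriv ?_
    rw [hk, cj_smul, cj_mul, conj_neg_two_I]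
    rw [mul_smul_comm]
  have hax : ∀ x t, HasDerivAt (fun s => a s t) ((-2 * Complex.I) • (L * a x t)) x := by
    intro x t
    rw [show (fun s => a s t) = fun s => (2:ℂ) • (h s t * cj E) from
      funext fun s => ha s t]
    refine (((hx x t).mul_const (cj E)).const_smul (2:ℂ)).congr_deriv ?_
    rw [ha]
    simp only [smul_mul_assoc, mul_smul_comm, mul_assoc]
    module
  have hbt : ∀ x t, HasDerivAt (fun s => b x s) (-(-4 * Complex.I) • (cj L * (cj L * b x t))) t := by
    intro x t
    rw [show (fun s => b x s) = fun s => (2:ℂ) • (cj L * cj (h x s) * E) from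
      funext fun s => hb x s]
    refine ((((hasDerivAt_cj (ht x t)).const_mul (cj L)).mul_const E).const_smul (2:ℂ)).congr_deriv ?_
    rw [hb, cj_smul, cj_mul, cj_mul, conj_neg_four_I]
    simp only [smul_mul_assoc, mul_smul_comm, mul_assoc]
    module
  have hat : ∀ x t, HasDerivAt (fun s => a x s) ((-4 * Complex.I) • (L * (L * a x t))) t := by
    intro x t
    rw [show (fun s => a x s) = fun s => (2:ℂ) • (h x s * cj E) from
      funext fun s => ha x s]
    refine (((ht x t).mul_const (cj E)).const_smul (2:ℂ)).congr_deriv ?_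
    rw [ha]
    simp only [smul_mul_assoc, mul_smul_comm, mul_assoc]
    module
  have hUx : ∀ x t, HasDerivAt (fun s => U s t)
      ((-2 * Complex.I) • (L * U x t + (2:ℂ) • (W x t * U x t))) x := fun x t =>
    hasDerivAt_U (k := fun s => k s t) (W := fun s => W s t) (hx x t) (hax x t) (hbx x t) (hu x t) (hLa x t) (hMb x t)
      (fun s => hU s t) (fun s => hW s t)
  have hWx : ∀ x t, HasDerivAt (fun s => W s t)
      ((2 * (-2 * Complex.I)) • (U x t * V x t)) x := fun x t => by
    rw [hV]
    exact hasDerivAt_W (h := fun s => h s t) (U := fun s => U s t) (hax x t) (hbx x t) (hkx x t) (hu x t) (hLa x t)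
      (fun s => hU s t) (fun s => hW s t)
  have hUt := hasDerivAt_Ut (k := fun s => k x s) (W := fun s => W x s) (ht x t) (hat x t) (hbt x t) (hu x t)
    (hLa x t) (hMb x t) (fun s => hU x s) (fun s => hW x s)
  have hUxx := hasDerivAt_Uxx (U := fun s => U s t) (W := fun s => W s t)
    (V := fun s => V s t) (hUx x t) (hWx x t)
  have hq1 : (fun s => q x s) = fun s => 4 * Complex.I * U x s 0 0 := funext fun s => hq x s
  have hq2 : (fun s => q s t) = fun s => 4 * Complex.I * U s t 0 0 := funext fun s => hq s t
  have hqx : ∀ y, deriv (fun s => q s t) y = 4 * Complex.I *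
      ((-2 * Complex.I) • (L * U y t + (2:ℂ) • (W y t * U y t))) 0 0 := fun y => by
    rw [hq2]
    exact ((hasDerivAt_entry (hUx y t)).const_mul (4 * Complex.I)).deriv
  have hqt := ((hasDerivAt_entry hUt).const_mul (4 * Complex.I)).deriv
  have hqxx := ((hasDerivAt_entry hUxx).const_mul (4 * Complex.I)).deriv
  have hrel := rel_V (hT x t) (hL x t) hE hS (ha x t) (hb x t) (hk x t) rfl
    (Ring.inverse_mul_cancel _ (hu x t)) (Ring.mul_inverse_cancel _ (hu x t)) (hU x t) (hW x t)
  rw [← hV] at hqt hrel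
  simp only [hqx]
  rw [hq1, hqt, hqxx, hq x t]
  have hUP : U x t = (Ring.inverse (1 + a x t * b x t) * h x t) * P0 n := hU x t
  have hVP : V x t = (k x t - b x t * (Ring.inverse (1 + a x t * b x t) * a x t * k x t)) * P0 n := by
    rw [hV, hW, sub_mul, mul_assoc (b x t)]
  have e1 : (U x t * V x t * U x t) 0 0 = U x t 0 0 * V x t 0 0 * U x t 0 0 := by
    rw [mul_assoc, col_mul_apply _ hUP, col_mul_apply _ hVP]; ring
  have e2 : (W x t * U x t) 0 0 = W x t 0 0 * U x t 0 0 := col_mul_apply _ (hW x t)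
  generalize L * (L * U x t + (2:ℂ) • (W x t * U x t))
      + (2:ℂ) • (W x t * (L * U x t + (2:ℂ) • (W x t * U x t))) = Z
  simp only [Matrix.smul_apply, Matrix.add_apply, Matrix.sub_apply, e1, e2, smul_eq_mul] at hrel ⊢
  exact gi_scalar hrel
end gi

/-! ### Jordan blocks and confluent Cauchy matrices -/

noncomputable section mats
open Matrix
variable {n : ℕ}

/-- The lower triangular Jordan block of size `n + 1` with eigenvalue `c`. -/
def jordanBlock (n : ℕ) (c : ℂ) : Matrix (Fin (n+1)) (Fin (n+1)) ℂ :=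
  Matrix.of fun i j => if i = j then c else if i.1 = j.1 + 1 then 1 else 0

/-- The confluent Cauchy matrix `C(p + i, i) (-1)^i / d^(i + p + 1)`, with indices starting at 0. -/
def cauchyMat (n : ℕ) (d : ℂ) : Matrix (Fin (n+1)) (Fin (n+1)) ℂ :=
  Matrix.of fun i p => ((p.1 + i.1).choose i.1 : ℂ) * (-1) ^ i.1 / d ^ (i.1 + p.1 + 1)

/-- The diagonal matrix of alternating signs. -/
def signMat (n : ℕ) : Matrix (Fin (n+1)) (Fin (n+1)) ℂ :=
  Matrix.diagonal fun i => (-1) ^ i.1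

theorem cj_jor (c : ℂ) : cj (jordanBlock n c) = jordanBlock n (starRingEnd ℂ c) := by
  ext i j
  simp only [cj_apply, jordanBlock, Matrix.of_apply]
  split_ifs <;> simp

theorem det_jor (c : ℂ) : (jordanBlock n c).det = c ^ (n + 1) := by
  rw [Matrix.det_of_isLowerTriangular]
  · simp [jordanBlock]
  · intro i j hij
    have hij : i < j := hij
    simp only [jordanBlock, Matrix.of_apply]
    rw [if_neg hij.ne, if_neg]
    have : i.1 < j.1 := hij
    omega

/-- Multiplication by the Jordan block acts on a sequence as `c` plus the backward shift. -/
theorem sum_shift_down (f : ℕ → ℂ) (i : Fin (n+1)) (c : ℂ) :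
    ∑ j : Fin (n+1), jordanBlock n c i j * f j.1 = c * f i.1 + if i.1 = 0 then 0 else f (i.1 - 1) := by
  have : ∀ j : Fin (n+1), jordanBlock n c i j * f j.1
      = (if i = j then c * f j.1 else 0) + (if i.1 = j.1 + 1 then f j.1 else 0) := by
    intro j
    simp only [jordanBlock, Matrix.of_apply]
    by_cases h : i = j
    · simp [h]
    · simp [h]
  rw [Finset.sum_congr rfl fun j _ => this j, Finset.sum_add_distrib]
  congr 1
  · simp
  · rw [Fin.sum_univ_eq_sum_range (fun j => if i.1 = j + 1 then f j else 0)]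
    split_ifs with h
    · exact Finset.sum_eq_zero fun j _ => by rw [if_neg]; omega
    · rw [Finset.sum_eq_single (i.1 - 1)]
      · rw [if_pos]; omega
      · intro j _ hj
        rw [if_neg]; omega
      · intro hh
        simp only [Finset.mem_range] at hh
        omega

/-- Multiplication by the transposed Jordan block acts as `c` plus the forward shift on a sequence
that vanishes at `n + 1`. -/
theorem sum_shift_up (f : ℕ → ℂ) (hf : f (n + 1) = 0) (i : Fin (n+1)) (c : ℂ) :
    ∑ j : Fin (n+1), jordanBlock n c j i * f j.1 = c * f i.1 + f (i.1 + 1) := by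
  have : ∀ j : Fin (n+1), jordanBlock n c j i * f j.1
      = (if j = i then c * f j.1 else 0) + (if j.1 = i.1 + 1 then f j.1 else 0) := by
    intro j
    simp only [jordanBlock, Matrix.of_apply]
    by_cases h : j = i
    · simp [h]
    · simp [h]
  rw [Finset.sum_congr rfl fun j _ => this j, Finset.sum_add_distrib]
  congr 1
  · simp
  · rw [Fin.sum_univ_eq_sum_range (fun j => if j = i.1 + 1 then f j else 0)]
    rw [Finset.sum_ite_eq']
    split_ifs with h
    · rfl
    · have : i.1 + 1 = n + 1 := by
        have := i.2; simp only [Finset.mem_range] at h; omega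
      rw [this, hf]

/-- Pascal's rule in the form needed for `jordanBlock_cau`. -/
theorem pascal (d : ℂ) (hd : d ≠ 0) (i p : ℕ) :
    d * (((p + i).choose i : ℂ) * (-1) ^ i / d ^ (i + p + 1))
      + (if i = 0 then 0 else
          ((p + (i - 1)).choose (i - 1) : ℂ) * (-1) ^ (i - 1) / d ^ ((i - 1) + p + 1))
      - (if p = 0 then 0 else
          (((p - 1) + i).choose i : ℂ) * (-1) ^ i / d ^ (i + (p - 1) + 1))
      = if i = 0 ∧ p = 0 then 1 else 0 := by
  rcases i with _ | i <;> rcases p with _ | p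
  · simp [hd]
  · simp; field_simp; ring
  · simp; field_simp; ring
  · simp only [Nat.add_eq_zero_iff, one_ne_zero, and_false, if_false, Nat.add_sub_cancel,
      and_self]
    have : ((p + 1 + (i + 1)).choose (i + 1) : ℂ)
        = ((p + 1 + i).choose i : ℂ) + ((p + (i + 1)).choose (i + 1) : ℂ) := by
      rw [show p + 1 + (i + 1) = (p + 1 + i) + 1 by ring, Nat.choose_succ_succ,
        show p + (i + 1) = p + 1 + i by ring]
      push_cast; rfl
    rw [this]
    field_simp
    ring

/-- The Sylvester equation of the confluent Cauchy matrix. -/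
theorem jordanBlock_cau (a c : ℂ) (hd : a - c ≠ 0) :
    jordanBlock n a * cauchyMat n (a - c) - cauchyMat n (a - c) * (jordanBlock n c)ᵀ = P0 n := by
  ext i p
  rw [Matrix.sub_apply, Matrix.mul_apply, Matrix.mul_apply]
  have e1 := sum_shift_down (n := n)
    (fun j => ((p.1 + j).choose j : ℂ) * (-1) ^ j / (a - c) ^ (j + p.1 + 1)) i a
  have e2 := sum_shift_down (n := n)
    (fun j => ((j + i.1).choose i.1 : ℂ) * (-1) ^ i.1 / (a - c) ^ (i.1 + j + 1)) p c
  have e3 : ∑ j, cauchyMat n (a - c) i j * (jordanBlock n c)ᵀ j p = ∑ j, jordanBlock n c p j *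
      (((j.1 + i.1).choose i.1 : ℂ) * (-1) ^ i.1 / (a - c) ^ (i.1 + j.1 + 1)) :=
    Finset.sum_congr rfl fun j _ => by rw [transpose_apply, mul_comm]; rfl
  rw [e3, e2]
  refine (congrArg (· - _) e1).trans ?_
  have := pascal (a - c) hd i.1 p.1
  simp only [P0, Matrix.single_apply]
  have e4 : ((0 : Fin (n+1)) = i ∧ (0 : Fin (n+1)) = p) ↔ (i.1 = 0 ∧ p.1 = 0) := by
    simp only [Fin.ext_iff, Fin.val_zero, eq_comm]
  simp only [e4]
  rw [← this]
  ring

theorem signMat_sq : signMat n * signMat n = 1 := by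
  simp only [signMat, diagonal_mul_diagonal, ← mul_pow]
  simp

theorem P0_sgn : P0 n * signMat n = P0 n := by
  ext i j
  simp only [signMat, P0, mul_diagonal, Matrix.single_apply]
  split_ifs with h
  · simp [← h.2]
  · simp

theorem jordanBlock_sgn (c : ℂ) : (jordanBlock n (-c))ᵀ * signMat n = -(signMat n * (jordanBlock n c)ᵀ) := by
  ext i j
  simp only [signMat, mul_diagonal, diagonal_mul, Matrix.neg_apply, transpose_apply, jordanBlock, of_apply]
  split_ifs with h1 h2
  · rw [h1]; ring
  · rw [h2]; ring
  · ring

theorem jordanBlock_cau_sgn (a c : ℂ) (hd : a + c ≠ 0) :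
    jordanBlock n a * (cauchyMat n (a + c) * signMat n) + (cauchyMat n (a + c) * signMat n) * (jordanBlock n c)ᵀ = P0 n := by
  have h := jordanBlock_cau (n := n) a (-c) (by rwa [sub_neg_eq_add])
  rw [sub_neg_eq_add] at h
  have h2 := congrArg (· * signMat n) h
  simp only [P0_sgn, sub_mul, mul_assoc, jordanBlock_sgn] at h2
  rw [← h2]
  simp only [mul_assoc, mul_neg, sub_neg_eq_add]

theorem cauchyMat_conjTranspose {d : ℂ} (hd : starRingEnd ℂ d = -d) : (cauchyMat n d)ᴴ = -cauchyMat n d := by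
  ext i p
  simp only [conjTranspose_apply, cauchyMat, of_apply, Matrix.neg_apply]
  change starRingEnd ℂ _ = _
  simp only [map_div₀, map_mul, map_pow, map_neg, map_one, map_natCast, hd]
  have e : (i.1 + p.1).choose p.1 = (p.1 + i.1).choose i.1 := by
    rw [add_comm, Nat.choose_symm_add]
  rw [e, neg_pow d, show (-1 : ℂ) ^ (p.1 + i.1 + 1) = (-1) ^ p.1 * (-1) ^ i.1 * (-1) by ring,
    show p.1 + i.1 + 1 = i.1 + p.1 + 1 by ring]
  have e1 : ((-1 : ℂ) ^ p.1) ≠ 0 := by simp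
  have e2 : ((-1 : ℂ) ^ i.1) * (-1) ^ i.1 = 1 := by rw [← mul_pow]; simp
  rw [mul_comm _ ((-1 : ℂ) ^ p.1), mul_assoc ((-1 : ℂ) ^ p.1), mul_assoc ((-1 : ℂ) ^ p.1),
    mul_div_mul_left _ _ e1, mul_assoc, ← neg_div]
  rcases eq_or_ne d 0 with h0 | h0
  · simp [h0]
  · have e3 : ((-1 : ℂ) ^ i.1) ≠ 0 := by simp
    field_simp
    rw [show ((-1 : ℂ) ^ i.1) ^ 2 = 1 by rw [pow_two, e2], mul_one]

theorem cauchyMat_sgn_conjTranspose {d : ℂ} (hd : starRingEnd ℂ d = d) :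
    (cauchyMat n d * signMat n)ᴴ = cauchyMat n d * signMat n := by
  ext i p
  simp only [conjTranspose_apply, cauchyMat, signMat, mul_diagonal, of_apply]
  change starRingEnd ℂ _ = _
  simp only [map_div₀, map_mul, map_pow, map_neg, map_one, map_natCast, hd]
  have e : (i.1 + p.1).choose p.1 = (p.1 + i.1).choose i.1 := by
    rw [add_comm, Nat.choose_symm_add]
  rw [e, show p.1 + i.1 + 1 = i.1 + p.1 + 1 by ring]
  ring

/-- Half of the difference of the two Cauchy matrices attached to `conj k₀ ∓ k₀`, divided on the
right by the transposed Jordan block. It solves the Sylvester equation for the squared block,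
and so plays the role of a confluent Cauchy matrix in the variable `k²`. -/
def eMat (n : ℕ) (k₀ : ℂ) : Matrix (Fin (n+1)) (Fin (n+1)) ℂ :=
  ((2 : ℂ)⁻¹ • (cauchyMat n (starRingEnd ℂ k₀ - k₀) - cauchyMat n (starRingEnd ℂ k₀ + k₀) * signMat n))
    * ((jordanBlock n k₀)ᵀ)⁻¹

/-- The four properties of `E`: the values of `2 E Jᵀ` and `2 J̄ E`, which recover both Cauchy
matrices; skew-Hermitian symmetry; and the Sylvester equation for `L = (Jᵀ)²`. -/
theorem eMat_rels {k₀ : ℂ} (h0 : k₀ ≠ 0) (h1 : starRingEnd ℂ k₀ - k₀ ≠ 0)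
    (h2 : starRingEnd ℂ k₀ + k₀ ≠ 0) :
    (2:ℂ) • (eMat n k₀ * (jordanBlock n k₀)ᵀ)
        = cauchyMat n (starRingEnd ℂ k₀ - k₀) - cauchyMat n (starRingEnd ℂ k₀ + k₀) * signMat n ∧
    (2:ℂ) • (cj (jordanBlock n k₀) * eMat n k₀)
        = cauchyMat n (starRingEnd ℂ k₀ - k₀) + cauchyMat n (starRingEnd ℂ k₀ + k₀) * signMat n ∧
    (eMat n k₀)ᴴ = - eMat n k₀ ∧
    ((jordanBlock n k₀)ᵀ * (jordanBlock n k₀)ᵀ)ᴴ * eMat n k₀ - eMat n k₀ * ((jordanBlock n k₀)ᵀ * (jordanBlock n k₀)ᵀ) = P0 n := by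
  have s1 := jordanBlock_cau (n := n) _ _ h1
  have s2 := jordanBlock_cau_sgn (n := n) _ _ h2
  have c1 : (cauchyMat n (starRingEnd ℂ k₀ - k₀))ᴴ = -cauchyMat n (starRingEnd ℂ k₀ - k₀) :=
    cauchyMat_conjTranspose (by simp)
  have c2 : (cauchyMat n (starRingEnd ℂ k₀ + k₀) * signMat n)ᴴ = cauchyMat n (starRingEnd ℂ k₀ + k₀) * signMat n :=
    cauchyMat_sgn_conjTranspose (by simp [add_comm])
  have hJ : IsUnit ((jordanBlock n k₀)ᵀ).det := by
    rw [det_transpose, det_jor]; exact (pow_ne_zero _ h0).isUnit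
  rw [← cj_jor] at s1 s2
  rw [eMat]
  generalize cauchyMat n (starRingEnd ℂ k₀ - k₀) = C at *
  generalize cauchyMat n (starRingEnd ℂ k₀ + k₀) * signMat n = C' at *
  generalize hE : ((2 : ℂ)⁻¹ • (C - C')) * ((jordanBlock n k₀)ᵀ)⁻¹ = E
  have r1 : (2:ℂ) • (E * (jordanBlock n k₀)ᵀ) = C - C' := by
    rw [← hE, mul_assoc, nonsing_inv_mul _ hJ, mul_one, smul_smul]; norm_num
  have cancel : ∀ X Y : Matrix (Fin (n+1)) (Fin (n+1)) ℂ,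
      X * (jordanBlock n k₀)ᵀ = Y * (jordanBlock n k₀)ᵀ → X = Y := fun X Y h => by
    have := congrArg (· * ((jordanBlock n k₀)ᵀ)⁻¹) h
    simpa only [mul_assoc, mul_nonsing_inv _ hJ, mul_one] using this
  have r2 : (2:ℂ) • (cj (jordanBlock n k₀) * E) = C + C' := by
    apply cancel
    have a1 : cj (jordanBlock n k₀) * C = P0 n + C * (jordanBlock n k₀)ᵀ := by rw [← s1]; abel
    have a2 : cj (jordanBlock n k₀) * C' = P0 n - C' * (jordanBlock n k₀)ᵀ := by rw [← s2]; abel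
    rw [smul_mul_assoc, mul_assoc, ← mul_smul_comm, r1, mul_sub, a1, a2, add_mul]
    abel
  refine ⟨r1, r2, ?_, ?_⟩
  · apply cancel
    have h3 := congrArg conjTranspose r2
    rw [conjTranspose_smul, conjTranspose_mul, conjTranspose_add, c1, c2,
      show (cj (jordanBlock n k₀))ᴴ = (jordanBlock n k₀)ᵀ from by ext; simp [cj],
      show star (2:ℂ) = 2 from by simp] at h3
    have h4 : (2:ℂ) • (Eᴴ * (jordanBlock n k₀)ᵀ) = (2:ℂ) • (-E * (jordanBlock n k₀)ᵀ) := by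
      rw [h3, neg_mul, smul_neg, r1]; abel
    have := congrArg ((2:ℂ)⁻¹ • ·) h4
    simpa only [smul_smul, inv_mul_cancel₀ (two_ne_zero' ℂ), one_smul] using this
  · have e : ((jordanBlock n k₀)ᵀ * (jordanBlock n k₀)ᵀ)ᴴ = cj (jordanBlock n k₀) * cj (jordanBlock n k₀) := by
      rw [conjTranspose_mul]; rfl
    have h3 : (2:ℂ) • (cj (jordanBlock n k₀) * (cj (jordanBlock n k₀) * E) - E * (jordanBlock n k₀)ᵀ * (jordanBlock n k₀)ᵀ)
        = (2:ℂ) • P0 n := by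
      rw [smul_sub, ← mul_smul_comm, r2, ← smul_mul_assoc, r1, two_smul]
      nth_rewrite 1 [← s1]
      rw [← s2]
      simp only [mul_add, sub_mul]
      abel
    rw [e, ← mul_assoc E, mul_assoc]
    have := congrArg ((2:ℂ)⁻¹ • ·) h3
    simpa only [smul_smul, inv_mul_cancel₀ (two_ne_zero' ℂ), one_smul] using this
end mats

/-! ### Hankel matrices of Taylor coefficients -/

noncomputable section tay
open Matrix
open scoped ContDiff

theorem contDiff_deriv_fst {Φ : ℂ × ℂ → ℂ} (hΦ : ContDiff ℂ ∞ Φ) (v : ℂ × ℂ) :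
    ContDiff ℂ ∞ (fun p => fderiv ℂ Φ p v) :=
  (hΦ.fderiv_right (m := ∞) (by simp)).clm_apply contDiff_const

theorem deriv_fst_eq {Φ : ℂ × ℂ → ℂ} (hΦ : ContDiff ℂ ∞ Φ) (k s : ℂ) :
    HasDerivAt (fun k => Φ (k, s)) (fderiv ℂ Φ (k, s) (1, 0)) k := by
  have h := (hΦ.differentiable (by simp) (k, s)).hasFDerivAt
  exact h.comp_hasDerivAt k ((hasDerivAt_id k).prodMk (hasDerivAt_const k s))

theorem deriv_snd_eq {Φ : ℂ × ℂ → ℂ} (hΦ : ContDiff ℂ ∞ Φ) (k s : ℂ) :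
    HasDerivAt (fun s => Φ (k, s)) (fderiv ℂ Φ (k, s) (0, 1)) s := by
  have h := (hΦ.differentiable (by simp) (k, s)).hasFDerivAt
  exact h.comp_hasDerivAt s ((hasDerivAt_const s k).prodMk (hasDerivAt_id s))

theorem fderiv_swap {Φ : ℂ × ℂ → ℂ} (hΦ : ContDiff ℂ ∞ Φ) (p v w : ℂ × ℂ) :
    fderiv ℂ (fun p => fderiv ℂ Φ p v) p w = fderiv ℂ (fun p => fderiv ℂ Φ p w) p v := by
  have hd : DifferentiableAt ℂ (fderiv ℂ Φ) p :=
    (hΦ.fderiv_right (m := ∞) (by simp)).differentiable (by simp) p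
  have hs : IsSymmSndFDerivAt ℂ Φ p := (hΦ.contDiffAt).isSymmSndFDerivAt
    (by rw [minSmoothness_of_isRCLikeNormedField]; exact WithTop.coe_le_coe.2 (le_top : (2 : ℕ∞) ≤ ⊤))
  have e : ∀ v w, fderiv ℂ (fun p => fderiv ℂ Φ p v) p w = fderiv ℂ (fderiv ℂ Φ) p w v := by
    intro v w
    rw [fderiv_clm_apply hd (differentiableAt_const v)]
    simp
  rw [e, e]
  exact hs w v

/-- Differentiation in a parameter commutes with the iterated derivative in `k`. -/
theorem hasDerivAt_iteratedDeriv (l : ℕ) {Φ : ℂ × ℂ → ℂ} (hΦ : ContDiff ℂ ∞ Φ) (k s : ℂ) :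
    HasDerivAt (fun s => iteratedDeriv l (fun k => Φ (k, s)) k)
      (iteratedDeriv l (fun k => fderiv ℂ Φ (k, s) (0, 1)) k) s := by
  induction l generalizing Φ with
  | zero => simpa using deriv_snd_eq hΦ k s
  | succ l ih =>
    have := ih (contDiff_deriv_fst hΦ (1, 0))
    simp only [iteratedDeriv_succ']
    have e1 : ∀ s, deriv (fun k => Φ (k, s)) = fun k => fderiv ℂ Φ (k, s) (1, 0) := fun s =>
      funext fun k => (deriv_fst_eq hΦ k s).deriv
    have e2 : deriv (fun k => fderiv ℂ Φ (k, s) (0, 1))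
        = fun k => fderiv ℂ (fun p => fderiv ℂ Φ p (1, 0)) (k, s) (0, 1) := by
      funext k
      rw [(deriv_fst_eq (contDiff_deriv_fst hΦ (0, 1)) k s).deriv, fderiv_swap hΦ]
    simp only [e1, e2]
    exact this

theorem contDiff_id_mul {g : ℂ → ℂ} (hg : ContDiff ℂ ∞ g) :
    ContDiff ℂ ∞ (fun k => k * g k) := contDiff_id.mul hg

/-- Leibniz rule for the product with the identity; for `l = 0` the truncated index `l - 1` is
harmless because of the factor `l`. -/
theorem iteratedDeriv_id_mul' (l : ℕ) {g : ℂ → ℂ} (hg : ContDiff ℂ ∞ g) (z : ℂ) :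
    iteratedDeriv l (fun k => k * g k) z
      = z * iteratedDeriv l g z + l * iteratedDeriv (l - 1) g z := by
  induction l generalizing g with
  | zero => simp
  | succ l ih =>
    have hd : deriv (fun k => k * g k) = fun k => g k + k * deriv g k := by
      funext k
      have : HasDerivAt (fun k => k * g k) _ k :=
        (hasDerivAt_id k).mul (hg.differentiable (by simp) k).hasDerivAt
      simpa using this.deriv
    have hg' : ContDiff ℂ ∞ (deriv g) := (contDiff_infty_iff_deriv.1 hg).2
    rw [iteratedDeriv_succ', hd,
      iteratedDeriv_fun_add ((hg.of_le (by exact_mod_cast le_top)).contDiffAt)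
        (((contDiff_id_mul hg').of_le (by exact_mod_cast le_top)).contDiffAt), ih hg']
    rcases l with _ | l
    · simp [iteratedDeriv_succ']; ring
    · simp only [Nat.add_sub_cancel, iteratedDeriv_succ']
      push_cast
      ring

/-- The `l`-th Taylor coefficient of `g` at `k₀`. -/
def taylorCoeff (k₀ : ℂ) (l : ℕ) (g : ℂ → ℂ) : ℂ :=
  (1 / (Nat.factorial l) : ℂ) * iteratedDeriv l g k₀

theorem taylorCoeff_zero_mul (k₀ : ℂ) (g : ℂ → ℂ) :
    taylorCoeff k₀ 0 (fun k => k * g k) = k₀ * taylorCoeff k₀ 0 g := by simp [taylorCoeff]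

theorem taylorCoeff_succ_mul (k₀ : ℂ) (l : ℕ) {g : ℂ → ℂ} (hg : ContDiff ℂ ∞ g) :
    taylorCoeff k₀ (l + 1) (fun k => k * g k) = k₀ * taylorCoeff k₀ (l + 1) g + taylorCoeff k₀ l g := by
  simp only [taylorCoeff, iteratedDeriv_id_mul' _ hg, Nat.add_sub_cancel, Nat.factorial_succ]
  have : (Nat.factorial l : ℂ) ≠ 0 := by exact_mod_cast Nat.factorial_ne_zero l
  have h2 : (l + 1 : ℂ) ≠ 0 := by exact_mod_cast Nat.succ_ne_zero l
  push_cast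
  field_simp

theorem taylorCoeff_const_mul (k₀ : ℂ) (l : ℕ) (c : ℂ) (g : ℂ → ℂ) :
    taylorCoeff k₀ l (fun k => c * g k) = c * taylorCoeff k₀ l g := by
  simp only [taylorCoeff]
  rw [iteratedDeriv_const_mul_field]; ring

/-- The sum `∑_{j=s}^N r_j τ_{j-s}(g)` of Taylor coefficients `τ` of `g`; it vanishes for `s > N`. -/
def etaSeq (N : ℕ) (k₀ : ℂ) (r : ℕ → ℂ) (g : ℂ → ℂ) (s : ℕ) : ℂ :=
  ∑ j ∈ Finset.Icc s N, r j * taylorCoeff k₀ (j - s) g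

theorem etaSeq_mul (N : ℕ) (k₀ : ℂ) (r : ℕ → ℂ) {g : ℂ → ℂ} (hg : ContDiff ℂ ∞ g) (s : ℕ) :
    etaSeq N k₀ r (fun k => k * g k) s = k₀ * etaSeq N k₀ r g s + etaSeq N k₀ r g (s + 1) := by
  rcases le_or_gt s N with hs | hs
  · simp only [etaSeq]
    rw [← Finset.add_sum_Ioc_eq_sum_Icc hs, ← Finset.add_sum_Ioc_eq_sum_Icc hs, mul_add,
      Finset.mul_sum, Nat.sub_self, taylorCoeff_zero_mul, Finset.Icc_add_one_left_eq_Ioc, add_assoc,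
      ← Finset.sum_add_distrib]
    congr 1
    · ring
    · refine Finset.sum_congr rfl fun j hj => ?_
      rw [Finset.mem_Ioc] at hj
      obtain ⟨m, rfl⟩ : ∃ m, j = s + 1 + m := ⟨j - (s + 1), by omega⟩
      rw [show s + 1 + m - s = m + 1 by omega, show s + 1 + m - (s + 1) = m by omega,
        taylorCoeff_succ_mul _ _ hg]
      ring
  · simp [etaSeq, Finset.Icc_eq_empty_of_lt hs, Finset.Icc_eq_empty_of_lt (Nat.lt_succ_of_lt hs)]

theorem etaSeq_const_mul (N : ℕ) (k₀ : ℂ) (r : ℕ → ℂ) (c : ℂ) (g : ℂ → ℂ) (s : ℕ) :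
    etaSeq N k₀ r (fun k => c * g k) s = c * etaSeq N k₀ r g s := by
  simp only [etaSeq, taylorCoeff_const_mul, Finset.mul_sum]
  exact Finset.sum_congr rfl fun _ _ => by ring

variable {n : ℕ}
/-- The Hankel matrix of the sequence `etaSeq`; its first column is `η` when `g` is the exponential. -/
def hankelMat (n : ℕ) (k₀ : ℂ) (r : ℕ → ℂ) (g : ℂ → ℂ) : Matrix (Fin (n+1)) (Fin (n+1)) ℂ :=
  Matrix.of fun i l => etaSeq (n + 1) k₀ r g (i.1 + l.1 + 1)

theorem hankelMat_transpose (k₀ : ℂ) (r : ℕ → ℂ) (g : ℂ → ℂ) :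
    (hankelMat n k₀ r g)ᵀ = hankelMat n k₀ r g := by
  ext i j
  simp only [transpose_apply, hankelMat, of_apply, add_comm i.1]

/-- Multiplying `g` by `k` multiplies its Hankel matrix by the transposed Jordan block. -/
theorem hankelMat_mul (k₀ : ℂ) (r : ℕ → ℂ) {g : ℂ → ℂ} (hg : ContDiff ℂ ∞ g) :
    hankelMat n k₀ r (fun k => k * g k) = (jordanBlock n k₀)ᵀ * hankelMat n k₀ r g := by
  ext i l
  rw [Matrix.mul_apply]
  have := sum_shift_up (n := n) (fun j => etaSeq (n + 1) k₀ r g (j + l.1 + 1))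
    (by simp only [etaSeq]; rw [Finset.Icc_eq_empty_of_lt (by omega), Finset.sum_empty]) i k₀
  simp only [hankelMat, of_apply, transpose_apply]
  rw [this, etaSeq_mul _ _ _ hg, add_right_comm i.1 1 l.1]

theorem hankelMat_const_mul (k₀ : ℂ) (r : ℕ → ℂ) (c : ℂ) (g : ℂ → ℂ) :
    hankelMat n k₀ r (fun k => c * g k) = c • hankelMat n k₀ r g := by
  ext i l
  simp only [hankelMat, of_apply, etaSeq_const_mul, Matrix.smul_apply, smul_eq_mul]

theorem hankelMat_jor (k₀ : ℂ) (r : ℕ → ℂ) {g : ℂ → ℂ} (hg : ContDiff ℂ ∞ g) :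
    hankelMat n k₀ r g * jordanBlock n k₀ = (jordanBlock n k₀)ᵀ * hankelMat n k₀ r g := by
  have h := hankelMat_transpose (n := n) k₀ r (fun k => k * g k)
  rw [hankelMat_mul k₀ r hg, transpose_mul, hankelMat_transpose, transpose_transpose] at h
  exact h

open scoped Matrix.Norms.Operator in
theorem hasDerivAt_hank (k₀ : ℂ) (r : ℕ → ℂ) {Φ : ℂ × ℂ → ℂ} (hΦ : ContDiff ℂ ∞ Φ) (s : ℝ) :
    HasDerivAt (fun s : ℝ => hankelMat n k₀ r (fun k => Φ (k, (s : ℂ))))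
      (hankelMat n k₀ r (fun k => fderiv ℂ Φ (k, (s : ℂ)) (0, 1))) s := by
  have e : ∀ g, hankelMat n k₀ r g = ∑ i : Fin (n+1), ∑ l : Fin (n+1),
      etaSeq (n + 1) k₀ r g (i.1 + l.1 + 1) • Matrix.single i l (1:ℂ) := by
    intro g
    conv_lhs => rw [Matrix.matrix_eq_sum_single (hankelMat n k₀ r g)]
    simp [hankelMat]
  simp only [e]
  refine HasDerivAt.fun_sum fun i _ => HasDerivAt.fun_sum fun l _ => HasDerivAt.smul_const ?_ _
  simp only [etaSeq]
  refine HasDerivAt.fun_sum fun j _ => HasDerivAt.const_mul _ ?_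
  simp only [taylorCoeff]
  exact ((hasDerivAt_iteratedDeriv _ hΦ k₀ s).comp_ofReal).const_mul _

/-- The exponential `e^{-2 i k² (x + 2 k² t)}`, with complex `x`, `t`, as a function of `k`. -/
def expPhase (x t : ℂ) (k : ℂ) : ℂ :=
  Complex.exp (-2 * Complex.I * k ^ 2 * (x + 2 * k ^ 2 * t))

theorem contDiff_ph (x t : ℂ) : ContDiff ℂ ∞ (expPhase x t) := by
  unfold expPhase; fun_prop

open scoped Matrix.Norms.Operator in
theorem hankelMat_x (k₀ : ℂ) (r : ℕ → ℂ) (x t : ℝ) :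
    HasDerivAt (fun s : ℝ => hankelMat n k₀ r (expPhase s t))
      ((-2 * Complex.I) • (((jordanBlock n k₀)ᵀ * (jordanBlock n k₀)ᵀ) * hankelMat n k₀ r (expPhase x t))) x := by
  have hΦ : ContDiff ℂ ∞ (fun p : ℂ × ℂ => expPhase p.2 t p.1) := by unfold expPhase; fun_prop
  have e : (fun k => fderiv ℂ (fun p : ℂ × ℂ => expPhase p.2 t p.1) (k, (x : ℂ)) (0, 1))
      = fun k => (-2 * Complex.I) * (k * (k * expPhase x t k)) := by
    funext k
    rw [← (deriv_snd_eq hΦ k x).deriv]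
    have h1 : HasDerivAt (fun s : ℂ => -2 * Complex.I * k ^ 2 * (s + 2 * k ^ 2 * t))
        (-2 * Complex.I * k ^ 2 * 1) x :=
      ((hasDerivAt_id (x : ℂ)).add_const _).const_mul _
    refine h1.cexp.deriv.trans ?_
    rw [expPhase]; ring
  have := hasDerivAt_hank (n := n) k₀ r hΦ x
  rw [e, hankelMat_const_mul, hankelMat_mul k₀ r (contDiff_id_mul (contDiff_ph _ _)),
    hankelMat_mul k₀ r (contDiff_ph _ _), ← mul_assoc] at this
  exact this

open scoped Matrix.Norms.Operator in
theorem hankelMat_t (k₀ : ℂ) (r : ℕ → ℂ) (x t : ℝ) :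
    HasDerivAt (fun s : ℝ => hankelMat n k₀ r (expPhase x s))
      ((-4 * Complex.I) • (((jordanBlock n k₀)ᵀ * (jordanBlock n k₀)ᵀ) * (((jordanBlock n k₀)ᵀ * (jordanBlock n k₀)ᵀ)
        * hankelMat n k₀ r (expPhase x t)))) t := by
  have hΦ : ContDiff ℂ ∞ (fun p : ℂ × ℂ => expPhase x p.2 p.1) := by unfold expPhase; fun_prop
  have e : (fun k => fderiv ℂ (fun p : ℂ × ℂ => expPhase x p.2 p.1) (k, (t : ℂ)) (0, 1))
      = fun k => (-4 * Complex.I) * (k * (k * (k * (k * expPhase x t k)))) := by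
    funext k
    rw [← (deriv_snd_eq hΦ k t).deriv]
    have h1 : HasDerivAt (fun s : ℂ => -2 * Complex.I * k ^ 2 * (x + 2 * k ^ 2 * s))
        (-2 * Complex.I * k ^ 2 * (2 * k ^ 2 * 1)) t :=
      (((hasDerivAt_id (t : ℂ)).const_mul _).const_add _).const_mul _
    refine h1.cexp.deriv.trans ?_
    rw [expPhase]; ring
  have := hasDerivAt_hank (n := n) k₀ r hΦ t
  have c0 := contDiff_ph x t
  rw [e, hankelMat_const_mul,
    hankelMat_mul k₀ r (contDiff_id_mul (contDiff_id_mul (contDiff_id_mul c0))),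
    hankelMat_mul k₀ r (contDiff_id_mul (contDiff_id_mul c0)),
    hankelMat_mul k₀ r (contDiff_id_mul c0),
    hankelMat_mul k₀ r c0] at this
  simpa only [mul_assoc] using this
end tay

/-! ### Reduction of the determinant formula -/

section red
variable {n : ℕ}

theorem etaZBC_eq (N : ℕ) (k₀ : ℂ) (r : ℕ → ℂ) (s : ℕ) (x t : ℝ) :
    etaZBC N k₀ r s x t = etaSeq N k₀ r (expPhase x t) s := rfl

/-- The double sum defining the blocks of `Ω` is a product of a Hankel and a Cauchy matrix. -/
theorem omegaSum_eq (k₀ : ℂ) (r : ℕ → ℂ) (d : ℂ) (i p : Fin (n+1)) (x t : ℝ) :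
    omegaSumZBC (n+1) k₀ r d (i.1 + 1) (p.1 + 1) x t
      = (cj (hankelMat n k₀ r (expPhase x t)) * cauchyMat n d) i p := by
  have e1 : (cj (hankelMat n k₀ r (expPhase x t)) * cauchyMat n d) i p
      = ∑ l ∈ Finset.range (n+1), ∑ j ∈ Finset.Icc (i.1 + l + 1) (n+1),
        starRingEnd ℂ (r j * flZBC k₀ (j - (i.1 + l + 1)) x t)
          * (((p.1 + l).choose l : ℂ) * (-1) ^ l / d ^ (l + p.1 + 1)) := by
    rw [Matrix.mul_apply, ← Fin.sum_univ_eq_sum_range (fun l =>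
      ∑ j ∈ Finset.Icc (i.1 + l + 1) (n+1),
        starRingEnd ℂ (r j * flZBC k₀ (j - (i.1 + l + 1)) x t)
          * (((p.1 + l).choose l : ℂ) * (-1) ^ l / d ^ (l + p.1 + 1)))]
    refine Finset.sum_congr rfl fun l _ => ?_
    rw [← Finset.sum_mul, ← map_sum]
    rfl
  rw [e1, omegaSumZBC, Finset.sum_comm' (t' := Finset.range (n + 1))
    (s' := fun l => Finset.Icc (i.1 + l + 1) (n + 1))]
  · refine Finset.sum_congr rfl fun l _ => Finset.sum_congr rfl fun j _ => ?_
    rw [map_mul, show p.1 + 1 + l - 1 = p.1 + l by omega,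
      show j - (i.1 + 1) - l = j - (i.1 + l + 1) by omega, add_assoc l p.1 1]
    ring
  · intro j l
    simp only [Finset.mem_range, Finset.mem_Icc]
    omega

theorem etaTilde_eq (N : ℕ) (k₀ : ℂ) (r : ℕ → ℂ) (s : ℕ) (x t : ℝ) :
    etaTildeZBC N k₀ r s x t = (-1) ^ (s + 1) * etaZBC N k₀ r s x t := by
  simp only [etaTildeZBC, etaZBC, Finset.mul_sum, mul_assoc]

/-- The rows of the two lower blocks of `Ω` are those of the upper blocks up to sign, so `Ω` factors
through `n + 1` dimensions. -/
theorem Omega_eq (k₀ : ℂ) (r : ℕ → ℂ) (x t : ℝ) :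
    OmegaZBC (n+1) k₀ r x t = Matrix.fromRows (-1) (signMat n) *
      Matrix.fromCols (cj (hankelMat n k₀ r (expPhase x t)) * cauchyMat n (conj k₀ - k₀))
        (cj (hankelMat n k₀ r (expPhase x t)) * cauchyMat n (conj k₀ + k₀)) := by
  rw [Matrix.fromRows_mul_fromCols, OmegaZBC]
  congr 1 <;> ext i p <;>
    simp only [Matrix.of_apply, omegaSum_eq, neg_mul, one_mul, Matrix.neg_apply, signMat,
      Matrix.diagonal_mul, pow_add, neg_one_sq, mul_one]

theorem cj_sgn : cj (signMat n) = signMat n := by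
  ext i j
  simp only [cj_apply, signMat, Matrix.diagonal_apply]
  split_ifs <;> simp

/-- On vectors of the form `(y, D y)`, `D` the sign matrix, `A` acts through the `(n+1) × (n+1)`
matrix `1 - Ḡ H` with `G = Q D - P`, `H = P + Q D`. -/
theorem A_mulVec {U : Matrix (Fin (n+1) ⊕ Fin (n+1)) (Fin (n+1)) ℂ}
    {P Q : Matrix (Fin (n+1)) (Fin (n+1)) ℂ}
    (hU : U = Matrix.fromRows (-1) (signMat n)) (y : Fin (n+1) → ℂ) :
    (IsigmaZBC (n+1) + cj (U * Matrix.fromCols P Q) * (U * Matrix.fromCols P Q)) *ᵥ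
        (Sum.elim y (signMat n *ᵥ y))
      = - (U *ᵥ ((1 - cj (Q * signMat n - P) * (P + Q * signMat n)) *ᵥ y)) := by
  have hcU : cj U = U := by
    rw [hU]; ext i j
    rcases i with i | i
    · simp only [cj_apply, Matrix.fromRows_apply_inl]
      exact congrFun (congrFun (show cj (-1 : Matrix (Fin (n+1)) (Fin (n+1)) ℂ) = -1 by
        rw [cj_neg, cj_one]) i) j
    · exact congrFun (congrFun cj_sgn i) j
  have hVU : Matrix.fromCols P Q * U = Q * signMat n - P := by
    rw [hU, Matrix.fromCols_mul_fromRows]; simp [sub_eq_neg_add]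
  have hz : Sum.elim y (signMat n *ᵥ y) = Matrix.fromRows (1 : Matrix (Fin (n+1)) (Fin (n+1)) ℂ) (signMat n) *ᵥ y := by
    rw [Matrix.fromRows_mulVec, Matrix.one_mulVec]
  have hI : IsigmaZBC (n+1) * Matrix.fromRows (1 : Matrix (Fin (n+1)) (Fin (n+1)) ℂ) (signMat n) = -U := by
    rw [hU, IsigmaZBC, Matrix.fromBlocks_mul_fromRows]
    ext i j
    rcases i with i | i <;> simp
  have hV : Matrix.fromCols P Q * Matrix.fromRows (1 : Matrix (Fin (n+1)) (Fin (n+1)) ℂ) (signMat n) = P + Q * signMat n := by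
    rw [Matrix.fromCols_mul_fromRows, Matrix.mul_one]
  rw [hz, Matrix.mulVec_mulVec, Matrix.mulVec_mulVec, ← Matrix.neg_mulVec]
  congr 1
  rw [Matrix.add_mul, hI, cj_mul, hcU]
  have : U * cj (Matrix.fromCols P Q) * (U * Matrix.fromCols P Q) * Matrix.fromRows (1 : Matrix (Fin (n+1)) (Fin (n+1)) ℂ) (signMat n)
      = U * (cj (Matrix.fromCols P Q * U) * (Matrix.fromCols P Q * Matrix.fromRows (1 : Matrix (Fin (n+1)) (Fin (n+1)) ℂ) (signMat n))) := by
    rw [cj_mul, hcU]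
    simp only [Matrix.mul_assoc]
  rw [this, hVU, hV, Matrix.mul_sub, Matrix.mul_one]
  abel

/-- Matrix determinant lemma, with the inverse replaced by a solution `z` of `A z = u`. -/
theorem det_add_vecMulVec' {m : Type*} [Fintype m] [DecidableEq m] {A : Matrix m m ℂ}
    (hA : A.det ≠ 0) {u v z : m → ℂ} (hz : A *ᵥ z = u) :
    (A + Matrix.vecMulVec u v).det / A.det - 1 = v ⬝ᵥ z := by
  have h := Matrix.det_add_replicateCol_mul_replicateRow (ι := Unit) hA.isUnit u v
  rw [← Matrix.vecMulVec_eq] at h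
  have hz' : A⁻¹ *ᵥ u = z := by
    rw [← hz, Matrix.mulVec_mulVec, Matrix.nonsing_inv_mul _ hA.isUnit, Matrix.one_mulVec]
  rw [h, mul_div_cancel_left₀ _ hA, Matrix.det_unique, Matrix.add_apply, Matrix.one_apply_eq,
    Matrix.mul_assoc, ← Matrix.replicateCol_mulVec, hz']
  simp [Matrix.mul_apply, dotProduct]

/-- Reduction of the `2(n+1)`-dimensional determinant formula to the corner entry of
`(1 + a b)⁻¹ h`. -/
theorem red_main {k₀ : ℂ} (h0 : k₀ ≠ 0) (h1 : conj k₀ - k₀ ≠ 0)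
    (h2 : conj k₀ + k₀ ≠ 0) (r : ℕ → ℂ) (x t : ℝ) (hA : (AmatZBC (n+1) k₀ r x t).det ≠ 0)
    {h L E Θ : Matrix (Fin (n+1)) (Fin (n+1)) ℂ} (hh : h = hankelMat n k₀ r (expPhase x t))
    (hL : L = (jordanBlock n k₀)ᵀ * (jordanBlock n k₀)ᵀ) (hE : E = eMat n k₀)
    (hΘ : Θ = 1 + ((2:ℂ) • (h * cj E)) * ((2:ℂ) • (cj L * cj h * E))) :
    IsUnit Θ ∧ qSolZBC (n+1) k₀ r x t = 4 * Complex.I * (Ring.inverse Θ * h * P0 n) 0 0 := by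
  obtain ⟨r1, r2, -, -⟩ := eMat_rels (n := n) h0 h1 h2
  rw [← hE] at r1 r2
  set P := cj h * cauchyMat n (conj k₀ - k₀) with hP
  set Q := cj h * cauchyMat n (conj k₀ + k₀) with hQ
  have hJ := hankelMat_jor (n := n) k₀ r (contDiff_ph x t)
  rw [← hh] at hJ
  have hG : cj (Q * signMat n - P) = -((2:ℂ) • (h * cj E * cj (jordanBlock n k₀)ᵀ)) := by
    have : Q * signMat n - P = -((2:ℂ) • (cj h * E * (jordanBlock n k₀)ᵀ)) := by
      rw [hP, hQ, mul_assoc (cj h) E, ← mul_smul_comm, r1]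
      simp only [Matrix.mul_sub, Matrix.mul_assoc]
      abel
    rw [this, cj_neg, cj_two_smul, cj_mul, cj_mul, cj_cj]
  have hH : P + Q * signMat n = (2:ℂ) • (cj h * cj (jordanBlock n k₀) * E) := by
    rw [hP, hQ, mul_assoc (cj h) _ E, ← mul_smul_comm, r2]
    simp only [Matrix.mul_add, Matrix.mul_assoc]
  have hΘ' : 1 - cj (Q * signMat n - P) * (P + Q * signMat n) = Θ := by
    rw [hG, hH, hΘ, hL, ← cj_mul h, hJ]
    simp only [cj_mul, neg_mul, smul_neg, sub_neg_eq_add, smul_mul_assoc, mul_smul_comm,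
      mul_assoc]
  set U : Matrix (Fin (n+1) ⊕ Fin (n+1)) (Fin (n+1)) ℂ := Matrix.fromRows (-1) (signMat n) with hU
  have hAm : AmatZBC (n+1) k₀ r x t
      = IsigmaZBC (n+1) + cj (U * Matrix.fromCols P Q) * (U * Matrix.fromCols P Q) := by
    rw [AmatZBC, Omega_eq, hP, hQ, hh]; rfl
  have key : ∀ y, AmatZBC (n+1) k₀ r x t *ᵥ (Sum.elim y (signMat n *ᵥ y)) = -(U *ᵥ (Θ *ᵥ y)) := by
    intro y
    rw [hAm, A_mulVec hU, hΘ']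
  have hunit : IsUnit Θ := by
    rw [← Matrix.mulVec_injective_iff_isUnit]
    intro y y' hy
    have hy : Θ *ᵥ y = Θ *ᵥ y' := hy
    have hAi := Matrix.mulVec_injective_iff_isUnit.2
      ((Matrix.isUnit_iff_isUnit_det _).2 hA.isUnit)
    have h3 := hAi ((key y).trans ((congrArg (fun v => -(U *ᵥ v)) hy).trans (key y').symm))
    funext i
    exact congrFun h3 (Sum.inl i)
  refine ⟨hunit, ?_⟩
  set η : Fin (n+1) → ℂ := fun i => etaZBC (n+1) k₀ r (i.1 + 1) x t with hη
  have hB : BvecZBC (n+1) k₀ r x t = -(U *ᵥ η) := by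
    rw [hU, Matrix.fromRows_mulVec]
    funext i
    rcases i with i | i
    · simp [BvecZBC, hη, Matrix.neg_mulVec]
    · simp only [BvecZBC, Sum.elim_inr, etaTilde_eq, Pi.neg_apply, signMat, Matrix.mulVec_diagonal, hη]
      ring
  have hz := key (Ring.inverse Θ *ᵥ η)
  rw [Matrix.mulVec_mulVec η Θ, Ring.mul_inverse_cancel _ hunit, Matrix.one_mulVec, ← hB] at hz
  rw [qSolZBC, det_add_vecMulVec' hA hz]
  have e1 : ∀ y : Fin (n+1) → ℂ, RvecZBC (n+1) ⬝ᵥ Sum.elim y (signMat n *ᵥ y) = 2 * y 0 := by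
    intro y
    have : ∀ w : Fin (n+1) → ℂ, ∑ i, (if i.1 = 0 then (1:ℂ) else 0) * w i = w 0 := by
      intro w
      rw [Finset.sum_eq_single 0]
      · simp
      · intro b _ hb
        rw [if_neg (show ¬ b.1 = 0 from fun hb' => hb (Fin.ext hb')), zero_mul]
      · simp
    rw [dotProduct, Fintype.sum_sum_type]
    simp only [RvecZBC, Sum.elim_inl, Sum.elim_inr, this]
    simp only [signMat, Matrix.mulVec_diagonal]
    simp; ring
  have e2 : (Ring.inverse Θ *ᵥ η) 0 = (Ring.inverse Θ * h * P0 n) 0 0 := by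
    rw [mul_P0_apply, Matrix.mul_apply]
    change ∑ j, Ring.inverse Θ 0 j * η j = _
    refine Finset.sum_congr rfl fun j _ => ?_
    rw [hh, hη]
    rfl
  rw [e1, e2]
  ring
end red

/-- The single high-order pole soliton formula yields a solution of the
Gerdjikov–Ivanov equation. -/
theorem single_high_order_pole_soliton (N : ℕ) (hN : 1 ≤ N) (k₀ : ℂ)
    (hk₀ : 0 < k₀.re * k₀.im) (r : ℕ → ℂ)
    (hdet : ∀ x t : ℝ, (AmatZBC N k₀ r x t).det ≠ 0) :
    ∀ x t : ℝ,
      Complex.I * deriv (fun s => qSolZBC N k₀ r x s) t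
        + deriv (fun s => deriv (fun s' => qSolZBC N k₀ r s' t) s) x
        - Complex.I * (qSolZBC N k₀ r x t) ^ 2 * conj (deriv (fun s => qSolZBC N k₀ r s t) x)
        + (1 / 2) * (qSolZBC N k₀ r x t) ^ 3 * (conj (qSolZBC N k₀ r x t)) ^ 2 = 0 := by
  obtain ⟨n, rfl⟩ : ∃ n, N = n + 1 := ⟨N - 1, by omega⟩
  have hre : k₀.re ≠ 0 := fun h => by simp [h] at hk₀
  have him : k₀.im ≠ 0 := fun h => by simp [h] at hk₀
  have h0 : k₀ ≠ 0 := fun h => hre (by simp [h])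
  have h1 : conj k₀ - k₀ ≠ 0 := fun h => him (by
    have := congrArg Complex.im h
    simp only [Complex.sub_im, Complex.conj_im, Complex.zero_im] at this
    linarith)
  have h2 : conj k₀ + k₀ ≠ 0 := fun h => hre (by
    have := congrArg Complex.re h
    simp only [Complex.add_re, Complex.conj_re, Complex.zero_re] at this
    linarith)
  obtain ⟨-, -, hE, hS⟩ := eMat_rels (n := n) h0 h1 h2
  have red := fun x t => red_main h0 h1 h2 r x t (hdet x t) rfl rfl rfl rfl
  intro x t
  refine gi_abstract (n := n) (h := fun x t => hankelMat n k₀ r (expPhase x t))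
    (fun x t => hankelMat_transpose _ _ _) (fun x t => ?_) hE hS (hankelMat_x k₀ r) (hankelMat_t k₀ r)
    (fun x t => (red x t).1) (fun x t => (red x t).2) x t
  have hJ := hankelMat_jor (n := n) k₀ r (contDiff_ph x t)
  rw [Matrix.transpose_mul, Matrix.transpose_transpose, mul_assoc, ← hJ, ← mul_assoc, ← hJ,
    mul_assoc]
end
end

section
/- Let q : ℝ → ℂ be continuous with q ∈ L¹(ℝ). For k ∈ ℂ with Im(k²) ≥ 0 consider the Volterra integral equation for a vector function m : ℝ → ℂ² (the modified first Jost column): m(x) = (1,0)ᵀ + ∫_{−∞}^{x} D(x−y,k) · ( ΔX(y,k) m(y) ) dy, where ΔX(y,k) = k Q(y) + (i/2)|q(y)|² σ₃ with Q = [[0,q],[−q*,0]], and D(s,k) = diag(1, e^{2 i k² s}). Then: (i) for each k with Im(k²) ≥ 0 this equation has a unique bounded continuous solution m(·,k) on ℝ; (ii) for each fixed x ∈ ℝ, the map k ↦ m(x,k) is analytic on D⁺ = {k ∈ ℂ : Re k · Im k > 0} and continuous on D⁺ ∪ (ℝ ∪ iℝ). -/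
/-!
The diagonal part `(i/2)|q|² σ₃` of the potential is treated separately from the off-diagonal part
`k Q`, because `q ∈ L¹` does not make `|q|²` integrable.

If `|q|²` is integrable near `-∞`, put `p x = ∫_{-∞}^x |q|²/2`. Writing
`m = (e^{ip} a, e^{-ip} b)` removes the diagonal part and leaves the Volterra system for `(a, b)`
with off-diagonal potential `u = q e^{-2ip} ∈ L¹`. Its Neumann series converges geometrically in a
weight `exp (2 R ∫_{-∞}^x |u|)`, uniformly in `x` and in `|k| ≤ R`, `Im (k²) ≥ 0`
(`norm_volTerm_le_weight`), so the sum is bounded and continuous in `x`, holomorphic in `k` for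
`Im (k²) > 0` and continuous in `k` for `Im (k²) ≥ 0` (`exists_offdiagonal_solution`). The phases
have modulus one and do not depend on `k`, so `m` inherits all of this; the passage between the two
integral equations goes through their differential form (`phase_integral_iff`, `jost_exists`).
Uniqueness is Gronwall's inequality started at `-∞` (`jost_unique`).

If `|q|²` is not integrable near `-∞`, the integrand of the Jost equation is not integrable for
the constant function `(1,0)ᵀ`, so the Bochner integral takes its default value `0` and the constant
is a solution; it is the only one (`jost_of_not_integrable`), and it does not depend on `k`.
-/

open Matrix Complex ComplexConjugate MeasureTheory

noncomputable section

abbrev M2 : Type := Matrix (Fin 2) (Fin 2) ℂ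

def sigma3 : M2 := !![1, 0; 0, -1]

/-- The potential matrix Q = [[0, q],[−q*, 0]]. -/
def Qm (a : ℂ) : M2 := !![0, a; -(conj a), 0]

/-- ΔX(y,k) = k Q(y) + (i/2)|q(y)|² σ₃. -/
def DeltaX (q : ℝ → ℂ) (y : ℝ) (k : ℂ) : M2 :=
  k • Qm (q y) + (Complex.I / 2 * (q y * conj (q y))) • sigma3

/-- D(s,k) = diag(1, e^{2ik²s}). -/
def Dker (s : ℝ) (k : ℂ) : M2 :=
  !![1, 0; 0, Complex.exp (2 * Complex.I * k ^ 2 * (s : ℂ))]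

/-- m is a bounded continuous solution of the Volterra integral equation for the
(modified) first Jost column. -/
def IsJostSol (q : ℝ → ℂ) (k : ℂ) (m : ℝ → Fin 2 → ℂ) : Prop :=
  Continuous m ∧ (∃ C : ℝ, ∀ x : ℝ, ‖m x‖ ≤ C) ∧
    ∀ x : ℝ, m x = ![1, 0] +
      ∫ y in Set.Iic x, (Dker (x - y) k).mulVec ((DeltaX q y k).mulVec (m y))

open Set Filter Topology

/-! ### Integrals from `-∞` and holomorphic parameter integrals -/

section Calculus

variable {E : Type*} [NormedAddCommGroup E] [NormedSpace ℝ E]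

theorem hasDerivAt_integral_Iic [CompleteSpace E] {g : ℝ → E} (hg : Continuous g)
    (hi : ∀ x, IntegrableOn g (Iic x)) (x : ℝ) :
    HasDerivAt (fun x => ∫ y in Iic x, g y) (g x) x := by
  have h : (fun x => ∫ y in Iic x, g y) =
      fun x => (∫ y in Iic (0 : ℝ), g y) + ∫ y in (0 : ℝ)..x, g y := by
    funext x
    rw [← intervalIntegral.integral_Iic_sub_Iic (hi 0) (hi x)]
    abel
  rw [h]
  exact (intervalIntegral.integral_hasDerivAt_right (hg.intervalIntegrable _ _)
    (hg.stronglyMeasurableAtFilter _ _) hg.continuousAt).const_add _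

theorem tendsto_integral_Iic_atBot {g : ℝ → E} {x₀ : ℝ} (hi : IntegrableOn g (Iic x₀)) :
    Tendsto (fun x => ∫ y in Iic x, g y) atBot (𝓝 0) := by
  have h := (intervalIntegral_tendsto_integral_Iic x₀ hi tendsto_id).const_sub
    (∫ y in Iic x₀, g y)
  rw [sub_self] at h
  refine h.congr' ?_
  filter_upwards [eventually_le_atBot x₀] with x hx
  rw [id, ← intervalIntegral.integral_Iic_sub_Iic (hi.mono_set (Iic_subset_Iic.2 hx)) hi]
  abel

/-- Gronwall's inequality with initial point `-∞`. -/
theorem eq_zero_of_le_integral_Iic {a w : ℝ → ℝ} (ha : Continuous a) (hw : Continuous w)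
    (ha0 : ∀ x, 0 ≤ a x) (hw0 : ∀ x, 0 ≤ w x) (hai : ∀ x, IntegrableOn a (Iic x))
    {C : ℝ} (hC : ∀ x, w x ≤ C) (h : ∀ x, w x ≤ ∫ y in Iic x, a y * w y) (x : ℝ) :
    w x = 0 := by
  have hi : ∀ x, IntegrableOn (fun y => a y * w y) (Iic x) := fun x =>
    (hai x).mul_bdd (c := C) hw.aestronglyMeasurable
      (Eventually.of_forall fun y => by rw [Real.norm_of_nonneg (hw0 y)]; exact hC y)
  set A : ℝ → ℝ := fun x => ∫ y in Iic x, a y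
  set W : ℝ → ℝ := fun x => ∫ y in Iic x, a y * w y
  have hA : ∀ x, HasDerivAt A (a x) x := hasDerivAt_integral_Iic ha hai
  have hW : ∀ x, HasDerivAt W (a x * w x) x := hasDerivAt_integral_Iic (ha.mul hw) hi
  have hd : ∀ x, HasDerivAt (fun x => Real.exp (-A x) * W x)
      (Real.exp (-A x) * (-a x) * W x + Real.exp (-A x) * (a x * w x)) x := fun x =>
    (hA x).neg.exp.mul (hW x)
  have hanti : Antitone (fun x => Real.exp (-A x) * W x) := by
    refine antitone_of_deriv_nonpos (fun x => (hd x).differentiableAt) fun x => ?_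
    rw [(hd x).deriv]
    have : Real.exp (-A x) * (-a x) * W x + Real.exp (-A x) * (a x * w x)
        = -(Real.exp (-A x) * a x * (W x - w x)) := by ring
    rw [this, neg_nonpos]
    exact mul_nonneg (mul_nonneg (Real.exp_pos _).le (ha0 x)) (sub_nonneg.2 (h x))
  have hlim : Tendsto (fun x => Real.exp (-A x) * W x) atBot (𝓝 0) := by
    have h1 := (Real.continuous_exp.tendsto _).comp (tendsto_integral_Iic_atBot (hai 0)).neg
    simpa using! h1.mul (tendsto_integral_Iic_atBot (hi 0))
  have h2 := hanti.ge_of_tendsto hlim x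
  have h3 : W x ≤ 0 := by
    by_contra! hh
    exact absurd h2 (not_le.2 (mul_pos (Real.exp_pos _) hh))
  exact le_antisymm ((h x).trans h3) (hw0 x)

/-- A dominated parameter integral of holomorphic functions is holomorphic: Cauchy's estimate
turns the bound on the integrand into a bound on its derivative. -/
theorem differentiableOn_integral_of_dominated {μ : Measure ℝ} {U : Set ℂ} (hU : IsOpen U)
    {F : ℂ → ℝ → ℂ} {bound : ℝ → ℝ} (hm : ∀ k ∈ U, AEStronglyMeasurable (F k) μ)
    (hb : ∀ᵐ y ∂μ, ∀ k ∈ U, ‖F k y‖ ≤ bound y) (hbi : Integrable bound μ)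
    (hd : ∀ᵐ y ∂μ, DifferentiableOn ℂ (fun k => F k y) U) :
    DifferentiableOn ℂ (fun k => ∫ y, F k y ∂μ) U := by
  intro k₀ hk₀
  obtain ⟨r, hr, hrU⟩ := Metric.isOpen_iff.1 hU k₀ hk₀
  have hsub : ∀ k ∈ Metric.ball k₀ (r / 2), Metric.closedBall k (r / 4) ⊆ U := by
    intro k hk z hz
    apply hrU
    rw [Metric.mem_ball] at hk ⊢
    rw [Metric.mem_closedBall] at hz
    linarith [dist_triangle z k k₀]
  have hder : ∀ᵐ y ∂μ, ∀ k ∈ U, HasDerivAt (fun k => F k y) (deriv (fun k => F k y) k) k := by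
    filter_upwards [hd] with y hy k hk
    exact (hy.differentiableAt (hU.mem_nhds hk)).hasDerivAt
  have hmeas : AEStronglyMeasurable (fun y => deriv (fun k => F k y) k₀) μ := by
    -- the derivative is a pointwise limit of difference quotients taken inside `U`
    set t : ℕ → ℂ := fun n => ((r / 2 * (1 / ((n : ℝ) + 1)) : ℝ) : ℂ)
    have ht0 : ∀ n, t n ≠ 0 := fun n => by
      simp only [t, ne_eq, Complex.ofReal_eq_zero]; positivity
    have htU : ∀ n, k₀ + t n ∈ U := fun n => by
      apply hrU
      have h1 : 1 / ((n : ℝ) + 1) ≤ 1 := by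
        rw [div_le_one (by positivity)]; linarith [n.cast_nonneg (α := ℝ)]
      have h2 : 0 ≤ 1 / ((n : ℝ) + 1) := by positivity
      simp only [Metric.mem_ball, dist_self_add_left, t, Complex.norm_real, Real.norm_eq_abs]
      rw [abs_of_nonneg (by positivity)]
      nlinarith
    have ht : Tendsto t atTop (𝓝[≠] 0) := by
      refine tendsto_nhdsWithin_iff.2 ⟨?_, Eventually.of_forall fun n => ht0 n⟩
      have := (tendsto_one_div_add_atTop_nhds_zero_nat (𝕜 := ℝ)).const_mul (r / 2)
      rw [mul_zero] at this
      have h := (Complex.continuous_ofReal.tendsto _).comp this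
      rw [Complex.ofReal_zero] at h
      exact h
    refine aestronglyMeasurable_of_tendsto_ae atTop
      (f := fun n y => (t n)⁻¹ • (F (k₀ + t n) y - F k₀ y)) (fun n => ?_) ?_
    · exact ((hm _ (htU n)).sub (hm _ hk₀)).const_smul (t n)⁻¹
    · filter_upwards [hder] with y hy
      exact (hasDerivAt_iff_tendsto_slope_zero.1 (hy k₀ hk₀)).comp ht
  have hball : Metric.ball k₀ (r / 2) ⊆ U := fun k hk =>
    hsub k hk (Metric.mem_closedBall_self (by positivity))
  refine (hasDerivAt_integral_of_dominated_loc_of_deriv_le (s := Metric.ball k₀ (r / 2))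
    (F := F) (F' := fun k y => deriv (fun k => F k y) k) (bound := fun y => bound y / (r / 4))
    (Metric.ball_mem_nhds _ (by positivity)) ?_ ?_ hmeas ?_ (hbi.div_const _)
    ?_).2.differentiableAt.differentiableWithinAt
  · filter_upwards [hU.mem_nhds hk₀] with k hk using hm k hk
  · exact hbi.mono' (hm _ hk₀) (hb.mono fun y hy => hy _ hk₀)
  · filter_upwards [hb, hd] with y hy hdy k hk
    refine Complex.norm_deriv_le_of_forall_mem_sphere_norm_le (by positivity) ?_ ?_
    · refine DifferentiableOn.diffContOnCl ?_
      exact hdy.mono ((closure_mono Metric.ball_subset_closedBall).trans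
        (Metric.isClosed_closedBall.closure_eq.subset.trans (hsub k hk)))
    · exact fun z hz => hy z (hsub k hk (Metric.sphere_subset_closedBall hz))
  · filter_upwards [hder] with y hy k hk using hy k (hball hk)

end Calculus

/-! ### Neumann series for an integrable off-diagonal potential -/

section Neumann

theorem norm_exp_phase_le {k : ℂ} (hk : 0 ≤ (k ^ 2).im) {s : ℝ} (hs : 0 ≤ s) :
    ‖Complex.exp (2 * Complex.I * k ^ 2 * (s : ℂ))‖ ≤ 1 := by
  rw [Complex.norm_exp, Real.exp_le_one_iff]
  have : (2 * Complex.I * k ^ 2 * (s : ℂ)).re = -(2 * ((k ^ 2).im * s)) := by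
    rw [show 2 * Complex.I * k ^ 2 * (s : ℂ) = Complex.I * (k ^ 2 * ((2 * s : ℝ) : ℂ)) by
      push_cast; ring, Complex.I_mul_re, Complex.im_mul_ofReal]
    ring
  rw [this]
  have := mul_nonneg hk hs
  linarith

/-- The kernel of the `n`-th Volterra step: the steps alternate between the second row of
`Dker` (even `n`) and the first row (odd `n`). -/
def volKer (n : ℕ) (k : ℂ) (s : ℝ) : ℂ :=
  if Even n then Complex.exp (2 * Complex.I * k ^ 2 * (s : ℂ)) else 1

/-- The entry of the off-diagonal matrix `Qm u` used in the `n`-th Volterra step. -/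
def volCoef (u : ℝ → ℂ) (n : ℕ) (y : ℝ) : ℂ :=
  if Even n then -conj (u y) else u y

/-- The terms of the Neumann series of `n = (1,0)ᵀ + k ∫ D (Qm u) n`. As `Qm u` is off-diagonal,
the even terms make up the first component and the odd terms the second one. -/
def volTerm (u : ℝ → ℂ) : ℕ → ℂ → ℝ → ℂ
  | 0 => fun _ _ => 1
  | n + 1 => fun k x => k * ∫ y in Iic x, volKer n k (x - y) * volCoef u n y * volTerm u n k y

theorem norm_volKer_le (n : ℕ) {k : ℂ} (hk : 0 ≤ (k ^ 2).im) {s : ℝ} (hs : 0 ≤ s) :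
    ‖volKer n k s‖ ≤ 1 := by
  unfold volKer
  split_ifs
  · exact norm_exp_phase_le hk hs
  · simp

theorem norm_volCoef (u : ℝ → ℂ) (n : ℕ) (y : ℝ) : ‖volCoef u n y‖ = ‖u y‖ := by
  unfold volCoef
  split_ifs <;> simp

theorem continuous_volCoef {u : ℝ → ℂ} (hu : Continuous u) (n : ℕ) :
    Continuous (volCoef u n) := by
  unfold volCoef
  split_ifs
  · exact (Complex.continuous_conj.comp hu).neg
  · exact hu

theorem volKer_sub (n : ℕ) (k : ℂ) (x y : ℝ) :
    volKer n k (x - y) = volKer n k x * volKer n k (-y) := by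
  unfold volKer
  split_ifs
  · rw [← Complex.exp_add]; congr 1; push_cast; ring
  · simp

theorem continuous_volKer (n : ℕ) (k : ℂ) : Continuous (volKer n k) := by
  unfold volKer
  split_ifs <;> fun_prop

theorem differentiable_volKer (n : ℕ) (s : ℝ) : Differentiable ℂ (fun k => volKer n k s) := by
  unfold volKer
  split_ifs <;> fun_prop

variable {u : ℝ → ℂ}

/-- The terms decay geometrically in the weight `exp (2 R ∫_{-∞}^x ‖u‖)`, because integrating
`‖u‖` against this weight gains a factor `1 / (2 R)`. -/
theorem norm_volTerm_le_weight (hu : Continuous u) (hi : Integrable u) {R : ℝ} (hR : 0 < R)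
    {k : ℂ} (hk : 0 ≤ (k ^ 2).im) (hkR : ‖k‖ ≤ R) (n : ℕ) (x : ℝ) :
    ‖volTerm u n k x‖ ≤ Real.exp (2 * R * ∫ y in Iic x, ‖u y‖) * (1 / 2) ^ n := by
  set A : ℝ → ℝ := fun x => ∫ y in Iic x, ‖u y‖ with hAdef
  have hA : ∀ x, HasDerivAt A ‖u x‖ x :=
    hasDerivAt_integral_Iic hu.norm fun x => hi.norm.integrableOn
  have hA0 : ∀ x, 0 ≤ A x := fun x => integral_nonneg fun y => norm_nonneg _
  have hAM : ∀ x, A x ≤ ∫ y, ‖u y‖ := fun x =>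
    setIntegral_le_integral hi.norm (Eventually.of_forall fun y => norm_nonneg _)
  have hAc : Continuous A := continuous_iff_continuousAt.2 fun x => (hA x).continuousAt
  have hEi : ∀ x, IntegrableOn (fun y => ‖u y‖ * Real.exp (2 * R * A y)) (Iic x) := by
    intro x
    refine hi.norm.integrableOn.mul_bdd (c := Real.exp (2 * R * ∫ y, ‖u y‖))
      (by fun_prop) (Eventually.of_forall fun y => ?_)
    rw [Real.norm_of_nonneg (Real.exp_pos _).le, Real.exp_le_exp]
    exact mul_le_mul_of_nonneg_left (hAM y) (by positivity)
  have hEint : ∀ x, ∫ y in Iic x, ‖u y‖ * Real.exp (2 * R * A y)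
      = Real.exp (2 * R * A x) / (2 * R) - 1 / (2 * R) := by
    intro x
    have hd : ∀ x, HasDerivAt (fun x => Real.exp (2 * R * A x) / (2 * R))
        (‖u x‖ * Real.exp (2 * R * A x)) x := by
      intro x
      refine (((hA x).const_mul (2 * R)).exp.div_const (2 * R)).congr_deriv ?_
      field_simp
    refine integral_Iic_of_hasDerivAt_of_tendsto (hd x).continuousAt.continuousWithinAt
      (fun x _ => hd x) (hEi x) ?_
    have h0 : Tendsto A atBot (𝓝 0) :=
      tendsto_integral_Iic_atBot (x₀ := 0) hi.norm.integrableOn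
    have h1 := ((Real.continuous_exp.tendsto _).comp (h0.const_mul (2 * R))).div_const (2 * R)
    simpa using! h1
  change ‖volTerm u n k x‖ ≤ Real.exp (2 * R * A x) * (1 / 2) ^ n
  induction n generalizing x with
  | zero =>
    have := hA0 x
    simp only [volTerm, norm_one, pow_zero, mul_one]
    exact Real.one_le_exp (by positivity)
  | succ n ih =>
    have hb : ‖∫ y in Iic x, volKer n k (x - y) * volCoef u n y * volTerm u n k y‖
        ≤ ∫ y in Iic x, (‖u y‖ * Real.exp (2 * R * A y)) * (1 / 2) ^ n := by
      refine norm_integral_le_of_norm_le ((hEi x).mul_const _) ?_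
      filter_upwards [ae_restrict_mem measurableSet_Iic] with y hy
      rw [norm_mul, norm_mul, norm_volCoef, mul_assoc, mul_assoc]
      refine (mul_le_of_le_one_left (by positivity)
        (norm_volKer_le n hk (sub_nonneg.2 hy))).trans ?_
      exact mul_le_mul_of_nonneg_left (ih y) (norm_nonneg _)
    rw [integral_mul_const, hEint] at hb
    simp only [volTerm, norm_mul]
    calc ‖k‖ * _ ≤ R * ((Real.exp (2 * R * A x) / (2 * R) - 1 / (2 * R)) * (1 / 2) ^ n) :=
          mul_le_mul hkR hb (norm_nonneg _) hR.le
      _ = (Real.exp (2 * R * A x) - 1) * (1 / 2) ^ (n + 1) := by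
          field_simp; ring
      _ ≤ _ := by
          gcongr
          linarith

/-- A bound for the Neumann series uniform in `x` and in `‖k‖ ≤ R`. -/
def volBound (u : ℝ → ℂ) (R : ℝ) : ℝ := Real.exp (2 * R * ∫ y, ‖u y‖)

theorem norm_volTerm_le (hu : Continuous u) (hi : Integrable u) {R : ℝ} (hR : 0 < R)
    {k : ℂ} (hk : 0 ≤ (k ^ 2).im) (hkR : ‖k‖ ≤ R) (n : ℕ) (x : ℝ) :
    ‖volTerm u n k x‖ ≤ volBound u R * (1 / 2) ^ n := by
  refine (norm_volTerm_le_weight hu hi hR hk hkR n x).trans ?_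
  unfold volBound
  gcongr
  · exact Eventually.of_forall fun y => norm_nonneg _
  · exact hi.norm
  · exact Measure.restrict_le_self

theorem norm_volTerm_le' (hu : Continuous u) (hi : Integrable u) {R : ℝ} (hR : 0 < R)
    {k : ℂ} (hk : 0 ≤ (k ^ 2).im) (hkR : ‖k‖ ≤ R) (n : ℕ) (x : ℝ) :
    ‖volTerm u n k x‖ ≤ volBound u R := by
  refine (norm_volTerm_le hu hi hR hk hkR n x).trans ?_
  exact mul_le_of_le_one_right (Real.exp_pos _).le (pow_le_one₀ (by norm_num) (by norm_num))

theorem norm_volIntegrand_le (hu : Continuous u) (hi : Integrable u) {R : ℝ} (hR : 0 < R)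
    {k : ℂ} (hk : 0 ≤ (k ^ 2).im) (hkR : ‖k‖ ≤ R) (n : ℕ) {x y : ℝ} (hy : y ≤ x) :
    ‖volKer n k (x - y) * volCoef u n y * volTerm u n k y‖
      ≤ ‖u y‖ * (volBound u R * (1 / 2) ^ n) := by
  rw [norm_mul, norm_mul, norm_volCoef, mul_assoc]
  refine (mul_le_of_le_one_left (by positivity)
    (norm_volKer_le n hk (sub_nonneg.2 hy))).trans ?_
  exact mul_le_mul_of_nonneg_left (norm_volTerm_le hu hi hR hk hkR n y) (norm_nonneg _)

theorem continuous_volTerm (hu : Continuous u) (hi : Integrable u)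
    {k : ℂ} (hk : 0 ≤ (k ^ 2).im) (n : ℕ) : Continuous (volTerm u n k) := by
  induction n with
  | zero => exact continuous_const
  | succ n ih =>
    have hR : 0 < ‖k‖ + 1 := by positivity
    have hc : Continuous fun y => volKer n k (-y) * volCoef u n y * volTerm u n k y :=
      (((continuous_volKer n k).comp continuous_neg).mul (continuous_volCoef hu n)).mul ih
    have hInt : ∀ x, IntegrableOn
        (fun y => volKer n k (-y) * volCoef u n y * volTerm u n k y) (Iic x) := by
      intro x
      have h1 : IntegrableOn
          (fun y => volKer n k (x - y) * volCoef u n y * volTerm u n k y) (Iic x) := by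
        refine (hi.norm.integrableOn.mul_const
          (volBound u (‖k‖ + 1) * (1 / 2) ^ n)).mono' ?_ ?_
        · have : Continuous fun y => volKer n k (x - y) * volCoef u n y * volTerm u n k y :=
            (((continuous_volKer n k).comp (continuous_const.sub continuous_id)).mul
              (continuous_volCoef hu n)).mul ih
          exact this.aestronglyMeasurable
        · filter_upwards [ae_restrict_mem measurableSet_Iic] with y hy
          exact norm_volIntegrand_le hu hi hR hk (by linarith) n hy
      refine (h1.const_mul (volKer n k (-x))).congr (Eventually.of_forall fun y => ?_)
      have h2 : volKer n k (-x) * volKer n k x = 1 := by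
        have := volKer_sub n k x x
        rw [sub_self] at this
        rw [mul_comm, ← this]
        simp [volKer]
      simp only [volKer_sub n k x y]
      linear_combination (volKer n k (-y) * volCoef u n y * volTerm u n k y) * h2
    have heq : volTerm u (n + 1) k = fun x => k * (volKer n k x *
        ∫ y in Iic x, volKer n k (-y) * volCoef u n y * volTerm u n k y) := by
      funext x
      simp only [volTerm]
      congr 1
      rw [← integral_const_mul]
      simp only [volKer_sub n k x, mul_assoc]
    rw [heq]
    refine continuous_const.mul ((continuous_volKer n k).mul ?_)
    exact continuous_iff_continuousAt.2 fun x =>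
      (hasDerivAt_integral_Iic hc hInt x).continuousAt

theorem continuous_volIntegrand (hu : Continuous u) (hi : Integrable u)
    {k : ℂ} (hk : 0 ≤ (k ^ 2).im) (n : ℕ) (x : ℝ) :
    Continuous fun y => volKer n k (x - y) * volCoef u n y * volTerm u n k y :=
  (((continuous_volKer n k).comp (continuous_const.sub continuous_id)).mul
    (continuous_volCoef hu n)).mul (continuous_volTerm hu hi hk n)

theorem integrableOn_volIntegrand (hu : Continuous u) (hi : Integrable u)
    {k : ℂ} (hk : 0 ≤ (k ^ 2).im) (n : ℕ) (x : ℝ) :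
    IntegrableOn (fun y => volKer n k (x - y) * volCoef u n y * volTerm u n k y) (Iic x) := by
  refine (hi.norm.integrableOn.mul_const (volBound u (‖k‖ + 1) * (1 / 2) ^ n)).mono'
    (continuous_volIntegrand hu hi hk n x).aestronglyMeasurable ?_
  filter_upwards [ae_restrict_mem measurableSet_Iic] with y hy
  exact norm_volIntegrand_le hu hi (by positivity) hk (by linarith) n hy

/-- The closed region `Im (k²) ≥ 0` cut to an open disc, where the Neumann series is dominated. -/
def closedRegion (R : ℝ) : Set ℂ := {k | 0 ≤ (k ^ 2).im} ∩ Metric.ball 0 R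

/-- The open region `Im (k²) > 0` cut to an open disc. -/
def openRegion (R : ℝ) : Set ℂ := {k | 0 < (k ^ 2).im} ∩ Metric.ball 0 R

theorem isOpen_openRegion (R : ℝ) : IsOpen (openRegion R) :=
  (isOpen_lt continuous_const (by fun_prop)).inter Metric.isOpen_ball

theorem openRegion_subset (R : ℝ) : openRegion R ⊆ closedRegion R :=
  inter_subset_inter_left _ fun k (hk : 0 < (k ^ 2).im) => hk.le

theorem norm_le_of_mem_closedRegion {R : ℝ} {k : ℂ} (hk : k ∈ closedRegion R) : ‖k‖ ≤ R :=
  (mem_ball_zero_iff.1 hk.2).le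

theorem continuousOn_volTerm (hu : Continuous u) (hi : Integrable u) {R : ℝ} (hR : 0 < R)
    (n : ℕ) (x : ℝ) : ContinuousOn (fun k => volTerm u n k x) (closedRegion R) := by
  induction n generalizing x with
  | zero => exact continuousOn_const
  | succ n ih =>
    refine continuousOn_id.mul (continuousOn_of_dominated
      (bound := fun y => ‖u y‖ * (volBound u R * (1 / 2) ^ n)) ?_ ?_
      (hi.norm.integrableOn.mul_const _) ?_)
    · exact fun k hk => (continuous_volIntegrand hu hi hk.1 n x).aestronglyMeasurable
    · intro k hk
      filter_upwards [ae_restrict_mem measurableSet_Iic] with y hy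
      exact norm_volIntegrand_le hu hi hR hk.1 (norm_le_of_mem_closedRegion hk) n hy
    · exact Eventually.of_forall fun y =>
        ((differentiable_volKer n _).continuous.continuousOn.mul continuousOn_const).mul (ih y)

theorem differentiableOn_volTerm (hu : Continuous u) (hi : Integrable u) {R : ℝ} (hR : 0 < R)
    (n : ℕ) (x : ℝ) : DifferentiableOn ℂ (fun k => volTerm u n k x) (openRegion R) := by
  induction n generalizing x with
  | zero => exact differentiableOn_const _
  | succ n ih =>
    refine differentiableOn_id.mul (differentiableOn_integral_of_dominated (isOpen_openRegion R)
      (bound := fun y => ‖u y‖ * (volBound u R * (1 / 2) ^ n)) ?_ ?_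
      (hi.norm.integrableOn.mul_const _) ?_)
    · exact fun k hk => (continuous_volIntegrand hu hi
        (openRegion_subset R hk).1 n x).aestronglyMeasurable
    · filter_upwards [ae_restrict_mem measurableSet_Iic] with y hy k hk
      have hk' := openRegion_subset R hk
      exact norm_volIntegrand_le hu hi hR hk'.1 (norm_le_of_mem_closedRegion hk') n hy
    · exact Eventually.of_forall fun y =>
        ((differentiable_volKer n _).differentiableOn.mul (differentiableOn_const _)).mul (ih y)

/-- The sum of the Neumann terms along a subsequence `φ`, which below runs through the even or
the odd indices. -/
def volSum (u : ℝ → ℂ) (φ : ℕ → ℕ) (k : ℂ) (x : ℝ) : ℂ := ∑' j, volTerm u (φ j) k x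

variable {φ : ℕ → ℕ}

theorem summable_volBound (hφ : Function.Injective φ) (R : ℝ) :
    Summable fun j => volBound u R * (1 / 2) ^ (φ j) :=
  (summable_geometric_two.comp_injective hφ).mul_left _

theorem norm_volSum_le (hu : Continuous u) (hi : Integrable u) (hφ : Function.Injective φ)
    {R : ℝ} (hR : 0 < R) {k : ℂ} (hk : 0 ≤ (k ^ 2).im) (hkR : ‖k‖ ≤ R) (x : ℝ) :
    ‖volSum u φ k x‖ ≤ ∑' j, volBound u R * (1 / 2) ^ (φ j) :=
  tsum_of_norm_bounded (summable_volBound hφ R).hasSum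
    fun j => norm_volTerm_le hu hi hR hk hkR (φ j) x

theorem summable_volTerm (hu : Continuous u) (hi : Integrable u) (hφ : Function.Injective φ)
    {k : ℂ} (hk : 0 ≤ (k ^ 2).im) (x : ℝ) : Summable fun j => volTerm u (φ j) k x :=
  (summable_volBound hφ (‖k‖ + 1)).of_norm_bounded
    fun j => norm_volTerm_le hu hi (by positivity) hk (by linarith) (φ j) x

theorem continuous_volSum (hu : Continuous u) (hi : Integrable u) (hφ : Function.Injective φ)
    {k : ℂ} (hk : 0 ≤ (k ^ 2).im) : Continuous (volSum u φ k) :=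
  continuous_tsum (fun j => continuous_volTerm hu hi hk (φ j))
    (summable_volBound hφ (‖k‖ + 1))
    fun j x => norm_volTerm_le hu hi (by positivity) hk (by linarith) (φ j) x

theorem continuousOn_volSum (hu : Continuous u) (hi : Integrable u) (hφ : Function.Injective φ)
    (x : ℝ) : ContinuousOn (fun k => volSum u φ k x) {k : ℂ | 0 ≤ (k ^ 2).im} := by
  intro k hk
  have hR : 0 < ‖k‖ + 1 := by positivity
  have hball : Metric.ball (0 : ℂ) (‖k‖ + 1) ∈ 𝓝 k :=
    Metric.isOpen_ball.mem_nhds (by simp)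
  have h := continuousOn_tsum (s := closedRegion (‖k‖ + 1))
    (fun j => continuousOn_volTerm hu hi hR (φ j) x) (summable_volBound (u := u) hφ (‖k‖ + 1))
    fun j k' hk' => norm_volTerm_le hu hi hR hk'.1 (norm_le_of_mem_closedRegion hk') (φ j) x
  exact (continuousWithinAt_inter hball).1 (h k ⟨hk, mem_of_mem_nhds hball⟩)

theorem differentiableOn_volSum (hu : Continuous u) (hi : Integrable u)
    (hφ : Function.Injective φ) (x : ℝ) :
    DifferentiableOn ℂ (fun k => volSum u φ k x) {k : ℂ | 0 < (k ^ 2).im} := by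
  intro k hk
  have hR : 0 < ‖k‖ + 1 := by positivity
  have hball : Metric.ball (0 : ℂ) (‖k‖ + 1) ∈ 𝓝 k :=
    Metric.isOpen_ball.mem_nhds (by simp)
  have h := Complex.differentiableOn_tsum_of_summable_norm
    (summable_volBound (u := u) hφ (‖k‖ + 1))
    (fun j => differentiableOn_volTerm hu hi hR (φ j) x) (isOpen_openRegion (‖k‖ + 1))
    fun j k' hk' => norm_volTerm_le hu hi hR (openRegion_subset _ hk').1
      (norm_le_of_mem_closedRegion (openRegion_subset _ hk')) (φ j) x
  exact (differentiableWithinAt_inter hball).1 (h k ⟨hk, mem_of_mem_nhds hball⟩)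

/-- One Volterra step applied termwise to a subsequence of constant parity. -/
theorem volSum_succ (hu : Continuous u) (hi : Integrable u) (hφ : Function.Injective φ)
    {k : ℂ} (hk : 0 ≤ (k ^ 2).im) {p : ℕ} (hp : ∀ j, Even (φ j) ↔ Even p) (x : ℝ) :
    volSum u (fun j => φ j + 1) k x
      = k * ∫ y in Iic x, volKer p k (x - y) * volCoef u p y * volSum u φ k y := by
  have hK : ∀ j, volKer (φ j) = volKer p := fun j => by
    funext k s; simp only [volKer, hp j]
  have hv : ∀ j, volCoef u (φ j) = volCoef u p := fun j => by
    funext y; simp only [volCoef, hp j]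
  have hs := (hasSum_integral_of_summable_integral_norm
    (μ := volume.restrict (Iic x))
    (F := fun j y => volKer (φ j) k (x - y) * volCoef u (φ j) y * volTerm u (φ j) k y)
    (fun j => integrableOn_volIntegrand hu hi hk (φ j) x) ?_).mul_left k
  · have h2 := hs.tsum_eq
    simp only [volSum, volTerm]
    rw [h2]
    congr 1
    refine integral_congr_ae (Eventually.of_forall fun y => ?_)
    simp only [hK, hv]
    exact tsum_mul_left
  · refine Summable.of_nonneg_of_le (fun j => integral_nonneg fun y => norm_nonneg _)
      (fun j => ?_) ((summable_volBound (u := u) hφ (‖k‖ + 1)).mul_left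
        (∫ y in Iic x, ‖u y‖))
    rw [← integral_mul_const]
    refine integral_mono_ae (integrableOn_volIntegrand hu hi hk (φ j) x).norm
      (hi.norm.integrableOn.mul_const _) ?_
    filter_upwards [ae_restrict_mem measurableSet_Iic] with y hy
    exact norm_volIntegrand_le hu hi (by positivity) hk (by linarith) (φ j) hy

/-- The Volterra system with an integrable off-diagonal potential has bounded solutions depending
analytically on `k`. -/
theorem exists_offdiagonal_solution (hu : Continuous u) (hi : Integrable u) :
    ∃ a b : ℂ → ℝ → ℂ,
      (∀ k : ℂ, 0 ≤ (k ^ 2).im → Continuous (a k) ∧ Continuous (b k) ∧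
        (∃ C, ∀ x, ‖a k x‖ ≤ C) ∧ (∃ C, ∀ x, ‖b k x‖ ≤ C) ∧
        (∀ x, a k x = 1 + k * ∫ y in Iic x, u y * b k y) ∧
        (∀ x, b k x = k * ∫ y in Iic x,
          Complex.exp (2 * Complex.I * k ^ 2 * ((x - y : ℝ) : ℂ)) * -conj (u y) * a k y)) ∧
      ∀ x, (DifferentiableOn ℂ (fun k => a k x) {k : ℂ | 0 < (k ^ 2).im} ∧
          ContinuousOn (fun k => a k x) {k : ℂ | 0 ≤ (k ^ 2).im}) ∧
        (DifferentiableOn ℂ (fun k => b k x) {k : ℂ | 0 < (k ^ 2).im} ∧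
          ContinuousOn (fun k => b k x) {k : ℂ | 0 ≤ (k ^ 2).im}) := by
  have hφ : Function.Injective fun j : ℕ => 2 * j := fun i j h => by
    simp only at h; omega
  have hψ : Function.Injective fun j : ℕ => 2 * j + 1 := fun i j h => by
    simp only at h; omega
  refine ⟨volSum u fun j => 2 * j, volSum u fun j => 2 * j + 1, fun k hk => ⟨?_, ?_, ?_, ?_, ?_, ?_⟩,
    fun x => ⟨⟨?_, ?_⟩, ?_, ?_⟩⟩
  · exact continuous_volSum hu hi hφ hk
  · exact continuous_volSum hu hi hψ hk
  · exact ⟨_, norm_volSum_le hu hi hφ (R := ‖k‖ + 1) (by positivity) hk (by linarith)⟩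
  · exact ⟨_, norm_volSum_le hu hi hψ (R := ‖k‖ + 1) (by positivity) hk (by linarith)⟩
  · intro x
    have h1 := volSum_succ hu hi hψ hk (p := 1) (fun j => by simp [Nat.even_add_one]) x
    have h2 := (summable_volTerm hu hi hφ hk x).tsum_eq_zero_add
    simp only [volKer, volCoef, Nat.not_even_one, if_false, one_mul] at h1
    rw [← h1]
    exact h2
  · intro x
    have h1 := volSum_succ hu hi hφ hk (p := 0) (fun j => by simp) x
    simpa only [volKer, volCoef, Even.zero, if_true] using! h1
  · exact differentiableOn_volSum hu hi hφ x
  · exact continuousOn_volSum hu hi hφ x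
  · exact differentiableOn_volSum hu hi hψ x
  · exact continuousOn_volSum hu hi hψ x

end Neumann

/-! ### Integrating factor for the oscillating kernel -/

section Phase

theorem exp_phase_sub (k : ℂ) (x y : ℝ) :
    Complex.exp (2 * Complex.I * k ^ 2 * ((x - y : ℝ) : ℂ)) =
      Complex.exp (2 * Complex.I * k ^ 2 * (x : ℂ)) *
        Complex.exp (-(2 * Complex.I * k ^ 2 * (y : ℂ))) := by
  rw [← Complex.exp_add]; congr 1; push_cast; ring

theorem integrableOn_exp_phase {k : ℂ} (hk : 0 ≤ (k ^ 2).im) {g : ℝ → ℂ} {x : ℝ}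
    (hi : IntegrableOn g (Iic x)) :
    IntegrableOn (fun y => Complex.exp (2 * Complex.I * k ^ 2 * ((x - y : ℝ) : ℂ)) * g y)
      (Iic x) := by
  refine Integrable.bdd_mul (c := 1) hi ?_ ?_
  · exact Continuous.aestronglyMeasurable (by fun_prop)
  · filter_upwards [ae_restrict_mem measurableSet_Iic] with y hy
    exact norm_exp_phase_le hk (sub_nonneg.2 hy)

theorem integrableOn_exp_neg_phase {k : ℂ} (hk : 0 ≤ (k ^ 2).im) {g : ℝ → ℂ} {x : ℝ}
    (hi : IntegrableOn g (Iic x)) :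
    IntegrableOn (fun y : ℝ => Complex.exp (-(2 * Complex.I * k ^ 2 * (y : ℂ))) * g y) (Iic x) := by
  refine ((integrableOn_exp_phase hk hi).const_mul
    (Complex.exp (-(2 * Complex.I * k ^ 2 * (x : ℂ))))).congr (Eventually.of_forall fun y => ?_)
  simp only
  rw [← mul_assoc, ← Complex.exp_add]
  congr 2; push_cast; ring

/-- The integral equation with kernel `e^{2ik²(x-y)}`, in differential form: the product with the
integrating factor `e^{-2ik²x}` is a primitive vanishing at `-∞`. -/
theorem phase_integral_iff {k : ℂ} (hk : 0 ≤ (k ^ 2).im) {f g : ℝ → ℂ} (hg : Continuous g)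
    (hi : ∀ x, IntegrableOn g (Iic x)) :
    (∀ x, f x = ∫ y : ℝ in Iic x, Complex.exp (2 * Complex.I * k ^ 2 * ((x - y : ℝ) : ℂ)) * g y) ↔
      (∀ x : ℝ, HasDerivAt (fun x : ℝ => Complex.exp (-(2 * Complex.I * k ^ 2 * (x : ℂ))) * f x)
        (Complex.exp (-(2 * Complex.I * k ^ 2 * (x : ℂ))) * g x) x) ∧
      Tendsto (fun x : ℝ => Complex.exp (-(2 * Complex.I * k ^ 2 * (x : ℂ))) * f x)
        atBot (𝓝 0) := by
  have hc : Continuous fun y : ℝ => Complex.exp (-(2 * Complex.I * k ^ 2 * (y : ℂ))) * g y := by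
    fun_prop
  have hi' := fun x : ℝ => integrableOn_exp_neg_phase hk (hi x)
  have hfac : ∀ x : ℝ,
      ∫ y : ℝ in Iic x, Complex.exp (2 * Complex.I * k ^ 2 * ((x - y : ℝ) : ℂ)) * g y =
      Complex.exp (2 * Complex.I * k ^ 2 * (x : ℂ)) *
        ∫ y : ℝ in Iic x, Complex.exp (-(2 * Complex.I * k ^ 2 * (y : ℂ))) * g y := fun x => by
    rw [← integral_const_mul]
    congr 1; funext y
    rw [exp_phase_sub, mul_assoc]
  have hinv : ∀ x : ℝ, Complex.exp (-(2 * Complex.I * k ^ 2 * (x : ℂ))) *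
      Complex.exp (2 * Complex.I * k ^ 2 * (x : ℂ)) = 1 := fun x => by
    rw [← Complex.exp_add, neg_add_cancel, Complex.exp_zero]
  constructor
  · intro h
    have heq : (fun x : ℝ => Complex.exp (-(2 * Complex.I * k ^ 2 * (x : ℂ))) * f x) =
        fun x => ∫ y : ℝ in Iic x, Complex.exp (-(2 * Complex.I * k ^ 2 * (y : ℂ))) * g y := by
      funext x
      rw [h x, hfac, ← mul_assoc, hinv, one_mul]
    rw [heq]
    exact ⟨hasDerivAt_integral_Iic hc hi', tendsto_integral_Iic_atBot (hi' 0)⟩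
  · rintro ⟨hd, ht⟩ x
    rw [hfac, integral_Iic_of_hasDerivAt_of_tendsto (hd x).continuousAt.continuousWithinAt
      (fun x _ => hd x) (hi' x) ht, sub_zero, ← mul_assoc, mul_comm (Complex.exp _), hinv, one_mul]

end Phase

/-! ### The Jost equation -/

section Jost

variable {q : ℝ → ℂ}

/-- The integrand of the Jost equation in components. -/
theorem jost_integrand (q : ℝ → ℂ) (k : ℂ) (x y : ℝ) (v : Fin 2 → ℂ) :
    (Dker (x - y) k).mulVec ((DeltaX q y k).mulVec v) =
      ![k * (q y * v 1) + Complex.I / 2 * ((‖q y‖ ^ 2 : ℝ) : ℂ) * v 0,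
        Complex.exp (2 * Complex.I * k ^ 2 * ((x - y : ℝ) : ℂ)) *
          (-(k * (conj (q y) * v 0)) - Complex.I / 2 * ((‖q y‖ ^ 2 : ℝ) : ℂ) * v 1)] := by
  have h : q y * conj (q y) = ((‖q y‖ ^ 2 : ℝ) : ℂ) := by
    rw [Complex.mul_conj, Complex.normSq_eq_norm_sq]
  ext i
  fin_cases i <;>
    simp [Dker, DeltaX, Qm, sigma3, Matrix.mulVec, dotProduct, Fin.sum_univ_two, h] <;> ring

theorem norm_jost_integrand_le {k : ℂ} (hk : 0 ≤ (k ^ 2).im) {x y : ℝ} (hy : y ≤ x)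
    (v : Fin 2 → ℂ) :
    ‖(Dker (x - y) k).mulVec ((DeltaX q y k).mulVec v)‖
      ≤ (‖k‖ * ‖q y‖ + ‖q y‖ ^ 2) * ‖v‖ := by
  have h0 := norm_le_pi_norm v 0
  have h1 := norm_le_pi_norm v 1
  have hI : ‖Complex.I / 2 * ((‖q y‖ ^ 2 : ℝ) : ℂ)‖ ≤ ‖q y‖ ^ 2 := by
    rw [norm_mul, norm_div, Complex.norm_I, Complex.norm_real, Real.norm_of_nonneg (by positivity)]
    have : 0 ≤ ‖q y‖ ^ 2 := by positivity
    norm_num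
    linarith
  rw [jost_integrand, pi_norm_le_iff_of_nonneg (by positivity), Fin.forall_fin_two, add_mul]
  constructor
  · simp only [Matrix.cons_val_zero]
    refine (norm_add_le _ _).trans (add_le_add ?_ ?_)
    · rw [norm_mul, norm_mul, mul_assoc]
      gcongr
    · rw [norm_mul]
      exact mul_le_mul hI h0 (norm_nonneg _) (by positivity)
  · simp only [Matrix.cons_val_one, Matrix.cons_val_fin_one]
    rw [norm_mul]
    refine (mul_le_of_le_one_left (norm_nonneg _)
      (norm_exp_phase_le hk (sub_nonneg.2 hy))).trans ?_
    refine (norm_sub_le _ _).trans (add_le_add ?_ ?_)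
    · rw [norm_neg, norm_mul, norm_mul, RCLike.norm_conj, mul_assoc]
      gcongr
    · rw [norm_mul]
      exact mul_le_mul hI h1 (norm_nonneg _) (by positivity)

theorem continuous_jost_integrand (hq : Continuous q) (k : ℂ) (x : ℝ) {m : ℝ → Fin 2 → ℂ}
    (hm : Continuous m) :
    Continuous fun y => (Dker (x - y) k).mulVec ((DeltaX q y k).mulVec (m y)) := by
  have h0 : Continuous fun y => m y 0 := (continuous_apply 0).comp hm
  have h1 : Continuous fun y => m y 1 := (continuous_apply 1).comp hm
  have hcq : Continuous fun y => conj (q y) := Complex.continuous_conj.comp hq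
  simp only [jost_integrand]
  refine continuous_pi fun i => ?_
  fin_cases i
  · simp only [Fin.zero_eta, Matrix.cons_val_zero]
    fun_prop
  · simp only [Fin.mk_one, Matrix.cons_val_one, Matrix.cons_val_fin_one]
    fun_prop

theorem integrableOn_jost_integrand (hq : Continuous q) (hi : Integrable q)
    (hq2 : ∀ x, IntegrableOn (fun y => ‖q y‖ ^ 2) (Iic x)) {k : ℂ} (hk : 0 ≤ (k ^ 2).im)
    {m : ℝ → Fin 2 → ℂ} (hm : Continuous m) {C : ℝ} (hC : ∀ x, ‖m x‖ ≤ C) (x : ℝ) :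
    IntegrableOn (fun y => (Dker (x - y) k).mulVec ((DeltaX q y k).mulVec (m y))) (Iic x) := by
  refine (((hi.norm.integrableOn.const_mul ‖k‖).add (hq2 x)).mul_const C).mono'
    (continuous_jost_integrand hq k x hm).aestronglyMeasurable ?_
  filter_upwards [ae_restrict_mem measurableSet_Iic] with y hy
  exact (norm_jost_integrand_le hk hy _).trans
    (mul_le_mul_of_nonneg_left (hC y) (by positivity))

/-- Uniqueness when `|q|²` is integrable at `-∞`, by Gronwall. -/
theorem jost_unique (hq : Continuous q) (hi : Integrable q)
    (hq2 : ∀ x, IntegrableOn (fun y => ‖q y‖ ^ 2) (Iic x)) {k : ℂ} (hk : 0 ≤ (k ^ 2).im)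
    {m m' : ℝ → Fin 2 → ℂ} (hm : IsJostSol q k m) (hm' : IsJostSol q k m') : m' = m := by
  obtain ⟨hc, ⟨C, hC⟩, he⟩ := hm
  obtain ⟨hc', ⟨C', hC'⟩, he'⟩ := hm'
  have hai : ∀ x, IntegrableOn (fun y => ‖k‖ * ‖q y‖ + ‖q y‖ ^ 2) (Iic x) := fun x =>
    (hi.norm.integrableOn.const_mul ‖k‖).add (hq2 x)
  have hbd : ∀ x, ‖m' x - m x‖ ≤ C' + C := fun x =>
    (norm_sub_le _ _).trans (add_le_add (hC' x) (hC x))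
  have hz := eq_zero_of_le_integral_Iic (a := fun y => ‖k‖ * ‖q y‖ + ‖q y‖ ^ 2)
    (w := fun x => ‖m' x - m x‖) (by fun_prop) (by fun_prop) (fun x => by positivity)
    (fun x => norm_nonneg _) hai hbd ?_
  · funext x
    exact sub_eq_zero.1 (norm_eq_zero.1 (hz x))
  · intro x
    have hdiff : m' x - m x =
        ∫ y in Iic x, (Dker (x - y) k).mulVec ((DeltaX q y k).mulVec (m' y - m y)) := by
      rw [he' x, he x, add_sub_add_left_eq_sub, ← integral_sub
        (integrableOn_jost_integrand hq hi hq2 hk hc' hC' x)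
        (integrableOn_jost_integrand hq hi hq2 hk hc hC x)]
      simp only [Matrix.mulVec_sub]
    rw [hdiff]
    refine norm_integral_le_of_norm_le ((hai x).mul_bdd (c := C' + C)
      (hc'.sub hc).norm.aestronglyMeasurable (Eventually.of_forall fun y => ?_)) ?_
    · rw [norm_norm]; exact hbd y
    · filter_upwards [ae_restrict_mem measurableSet_Iic] with y hy
      exact norm_jost_integrand_le hk hy _

/-- Existence when `|q|²` is integrable at `-∞`: the phase `e^{±ip}` with `p' = |q|²/2` removes
the diagonal part of the potential. -/
theorem jost_exists (hq : Continuous q) (hi : Integrable q)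
    (hq2 : ∀ x, IntegrableOn (fun y => ‖q y‖ ^ 2) (Iic x)) :
    ∃ m : ℂ → ℝ → Fin 2 → ℂ, (∀ k : ℂ, 0 ≤ (k ^ 2).im → IsJostSol q k (m k)) ∧
      ∀ x : ℝ, DifferentiableOn ℂ (fun k => m k x) {k : ℂ | 0 < (k ^ 2).im} ∧
        ContinuousOn (fun k => m k x) {k : ℂ | 0 ≤ (k ^ 2).im} := by
  set p : ℝ → ℝ := fun x => ∫ y in Iic x, ‖q y‖ ^ 2 / 2
  have hp : ∀ x, HasDerivAt p (‖q x‖ ^ 2 / 2) x :=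
    hasDerivAt_integral_Iic (by fun_prop) fun x => (hq2 x).div_const 2
  have hp0 : Tendsto p atBot (𝓝 0) := tendsto_integral_Iic_atBot ((hq2 0).div_const 2)
  have hpc : Continuous p := continuous_iff_continuousAt.2 fun x => (hp x).continuousAt
  set e : ℝ → ℂ := fun x => Complex.exp (Complex.I * (p x : ℂ)) with he_def
  set e' : ℝ → ℂ := fun x => Complex.exp (-(Complex.I * (p x : ℂ))) with he'_def
  have hee : ∀ x, e x * e' x = 1 := fun x => by
    simp only [e, e']; rw [← Complex.exp_add, add_neg_cancel, Complex.exp_zero]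
  have hpC : ∀ x, HasDerivAt (fun x => Complex.I * (p x : ℂ))
      (Complex.I * ((‖q x‖ ^ 2 / 2 : ℝ) : ℂ)) x := fun x => (hp x).ofReal_comp.const_mul _
  have hde : ∀ x, HasDerivAt e (e x * (Complex.I * ((‖q x‖ ^ 2 / 2 : ℝ) : ℂ))) x :=
    fun x => (hpC x).cexp
  have hde' : ∀ x, HasDerivAt e' (e' x * -(Complex.I * ((‖q x‖ ^ 2 / 2 : ℝ) : ℂ))) x :=
    fun x => (hpC x).neg.cexp
  have hec : Continuous e := by fun_prop
  have hec' : Continuous e' := by fun_prop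
  have hen : ∀ x, ‖e x‖ = 1 := fun x => by
    simp only [e]; rw [mul_comm]; exact Complex.norm_exp_ofReal_mul_I _
  have hen' : ∀ x, ‖e' x‖ = 1 := fun x => by
    have := congrArg norm (hee x)
    rwa [norm_mul, hen, one_mul, norm_one] at this
  have hconj : ∀ x, conj (e' x) = e x := fun x => by
    simp only [e, e']; rw [← Complex.exp_conj]; simp
  set u : ℝ → ℂ := fun x => q x * (e' x * e' x) with hu_def
  have huc : Continuous u := by fun_prop
  have hui : Integrable u := hi.mul_bdd (c := 1) (hec'.mul hec').aestronglyMeasurable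
    (Eventually.of_forall fun x => by rw [norm_mul, hen', one_mul])
  obtain ⟨a, b, hab, hreg⟩ := exists_offdiagonal_solution huc hui
  refine ⟨fun k x => ![e x * a k x, e' x * b k x], fun k hk => ?_, fun x => ?_⟩
  · obtain ⟨hac, hbc, ⟨Ca, hCa⟩, ⟨Cb, hCb⟩, hae, hbe⟩ := hab k hk
    have hucc : Continuous fun y => conj (u y) := Complex.continuous_conj.comp huc
    have hqcc : Continuous fun y => conj (q y) := Complex.continuous_conj.comp hq
    have hmc : Continuous fun x => ![e x * a k x, e' x * b k x] := by
      refine continuous_pi fun i => ?_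
      fin_cases i
      · exact hec.mul hac
      · exact hec'.mul hbc
    have hmb : ∀ x, ‖![e x * a k x, e' x * b k x]‖ ≤ max Ca Cb := fun x => by
      have h0 : 0 ≤ max Ca Cb := le_max_of_le_left ((norm_nonneg _).trans (hCa 0))
      rw [pi_norm_le_iff_of_nonneg h0, Fin.forall_fin_two]
      constructor
      · simp only [Matrix.cons_val_zero, norm_mul, hen, one_mul]
        exact le_max_of_le_left (hCa x)
      · simp only [Matrix.cons_val_one, Matrix.cons_val_fin_one, norm_mul, hen', one_mul]
        exact le_max_of_le_right (hCb x)
    refine ⟨hmc, ⟨_, hmb⟩, fun x => ?_⟩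
    have hInt := integrableOn_jost_integrand hq hi hq2 hk hmc hmb
    simp only [jost_integrand] at hInt ⊢
    have hInt0 := fun x => (hInt x).eval 0
    have hInt1 := fun x => (hInt x).eval 1
    simp only [Matrix.cons_val_zero, Matrix.cons_val_one, Matrix.cons_val_fin_one] at hInt0 hInt1
    have hub : Integrable (fun y => u y * b k y) :=
      hui.mul_bdd (c := Cb) hbc.aestronglyMeasurable (Eventually.of_forall hCb)
    have hua : Integrable (fun y => -(k * (conj (u y) * a k y))) := by
      have : Integrable (fun y => conj (u y)) :=
        hui.mono hucc.aestronglyMeasurable (Eventually.of_forall fun y => by simp)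
      exact ((this.mul_bdd (c := Ca) hac.aestronglyMeasurable
        (Eventually.of_forall hCa)).const_mul k).neg
    -- the first component of the off-diagonal system in differential form
    have hda : ∀ x, HasDerivAt (a k) (k * (u x * b k x)) x := fun x => by
      have h := ((hasDerivAt_integral_Iic (huc.mul hbc) (fun x => hub.integrableOn) x).const_mul
        k).const_add 1
      exact h.congr_of_eventuallyEq (Eventually.of_forall hae)
    have ha1 : Tendsto (a k) atBot (𝓝 1) := by
      have h := ((tendsto_integral_Iic_atBot (x₀ := 0) hub.integrableOn).const_mul k).const_add 1
      rw [mul_zero, add_zero] at h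
      exact h.congr fun x => (hae x).symm
    have hbe' : ∀ x, b k x = ∫ y in Iic x,
        Complex.exp (2 * Complex.I * k ^ 2 * ((x - y : ℝ) : ℂ)) *
          -(k * (conj (u y) * a k y)) := fun x => by
      rw [hbe x, ← integral_const_mul]
      congr 1; funext y; ring
    obtain ⟨hdb, hb0⟩ := (phase_integral_iff hk (by fun_prop)
      fun x => hua.integrableOn).1 hbe'
    ext i
    rw [Pi.add_apply, eval_integral fun i => (hInt x).eval i]
    fin_cases i
    · simp only [Fin.zero_eta, Matrix.cons_val_zero, Matrix.cons_val_one, Matrix.cons_val_fin_one]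
      have hd : ∀ x, HasDerivAt (fun x => e x * a k x)
          (k * (q x * (e' x * b k x)) +
            Complex.I / 2 * ((‖q x‖ ^ 2 : ℝ) : ℂ) * (e x * a k x)) x := fun x => by
        refine ((hde x).mul (hda x)).congr_deriv ?_
        simp only [hu_def]
        push_cast
        linear_combination (k * q x * e' x * b k x) * hee x
      have hl : Tendsto (fun x => e x * a k x) atBot (𝓝 1) := by
        have h1 : Tendsto e atBot (𝓝 1) := by
          have h := (Complex.continuous_exp.tendsto _).comp
            (((Complex.continuous_ofReal.tendsto _).comp hp0).const_mul Complex.I)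
          simpa using! h
        simpa using! h1.mul ha1
      rw [integral_Iic_of_hasDerivAt_of_tendsto (hd x).continuousAt.continuousWithinAt
        (fun x _ => hd x) (hInt0 x) hl]
      ring
    · simp only [Fin.mk_one, Matrix.cons_val_zero, Matrix.cons_val_one, Matrix.cons_val_fin_one, zero_add]
      have hdx : ∀ x : ℝ, HasDerivAt
          (fun x : ℝ => Complex.exp (-(2 * Complex.I * k ^ 2 * (x : ℂ))) * (e' x * b k x))
          (Complex.exp (-(2 * Complex.I * k ^ 2 * (x : ℂ))) *
            (-(k * (conj (q x) * (e x * a k x))) -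
              Complex.I / 2 * ((‖q x‖ ^ 2 : ℝ) : ℂ) * (e' x * b k x))) x := fun x => by
        have h := (hde' x).mul (hdb x)
        have hf : (fun x : ℝ =>
            Complex.exp (-(2 * Complex.I * k ^ 2 * (x : ℂ))) * (e' x * b k x)) =
            e' * fun x : ℝ => Complex.exp (-(2 * Complex.I * k ^ 2 * (x : ℂ))) * b k x := by
          funext x; simp only [Pi.mul_apply]; ring
        rw [hf]
        refine h.congr_deriv ?_
        simp only [hu_def, map_mul, hconj]
        push_cast
        linear_combination (-(Complex.exp (-(2 * Complex.I * k ^ 2 * (x : ℂ))) * k *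
          conj (q x) * e x * a k x)) * hee x
      have hlx : Tendsto (fun x : ℝ =>
          Complex.exp (-(2 * Complex.I * k ^ 2 * (x : ℂ))) * (e' x * b k x)) atBot (𝓝 0) := by
        refine squeeze_zero_norm (fun x => ?_) (tendsto_norm_zero.comp hb0)
        rw [mul_left_comm, norm_mul, hen', one_mul, Function.comp_apply]
      have hgi : ∀ x, IntegrableOn (fun y => -(k * (conj (q y) * (e y * a k y))) -
          Complex.I / 2 * ((‖q y‖ ^ 2 : ℝ) : ℂ) * (e' y * b k y)) (Iic x) := fun x => by
        have h1 : Integrable (fun y => conj (q y)) :=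
          hi.mono hqcc.aestronglyMeasurable (Eventually.of_forall fun y => by simp)
        have h2 : Integrable (fun y => conj (q y) * (e y * a k y)) :=
          h1.mul_bdd (c := Ca) (hec.mul hac).aestronglyMeasurable
            (Eventually.of_forall fun y => by rw [norm_mul, hen, one_mul]; exact hCa y)
        have h3 : IntegrableOn (fun y => Complex.I / 2 * ((‖q y‖ ^ 2 : ℝ) : ℂ)) (Iic x) :=
          (hq2 x).ofReal.const_mul _
        exact (h2.const_mul k).neg.integrableOn.sub
          (h3.mul_bdd (c := Cb) (hec'.mul hbc).aestronglyMeasurable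
            (Eventually.of_forall fun y => by rw [norm_mul, hen', one_mul]; exact hCb y))
      exact (phase_integral_iff hk (f := fun x => e' x * b k x)
        (by fun_prop) hgi).2 ⟨hdx, hlx⟩ x
  · obtain ⟨⟨had, hac⟩, hbd, hbc⟩ := hreg x
    constructor
    · refine differentiableOn_pi.2 fun i => ?_
      fin_cases i
      · exact had.const_mul _
      · exact hbd.const_mul _
    · refine continuousOn_pi.2 fun i => ?_
      fin_cases i
      · exact continuousOn_const.mul hac
      · exact continuousOn_const.mul hbc

/-- If `|q|²` is not integrable at `-∞`, the integral in the Jost equation has a non-integrable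
first component for every continuous bounded `m` with `m → (1,0)ᵀ`, and the Bochner integral of
such a function is `0` by convention. The constant `(1,0)ᵀ` is then the only solution: a solution
with an integrable integrand would tend to `1` in its first component, forcing `|q|²` to be
integrable. -/
theorem jost_of_not_integrable (hq : Continuous q) (hi : Integrable q)
    (hq2 : ∀ x, ¬ IntegrableOn (fun y => ‖q y‖ ^ 2) (Iic x)) (k : ℂ) :
    IsJostSol q k (fun _ => ![1, 0]) ∧ ∀ m, IsJostSol q k m → m = fun _ => ![1, 0] := by
  -- the off-diagonal term `k q m₁` is integrable because `m` is bounded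
  have key : ∀ (m : ℝ → Fin 2 → ℂ) (x : ℝ), Continuous m → (∃ C : ℝ, ∀ x, ‖m x‖ ≤ C) →
      IntegrableOn (fun y => k * (q y * m y 1) +
        Complex.I / 2 * ((‖q y‖ ^ 2 : ℝ) : ℂ) * m y 0) (Iic x) →
      IntegrableOn (fun y => ((‖q y‖ ^ 2 : ℝ) : ℂ) * m y 0) (Iic x) := by
    rintro m x hm ⟨C, hC⟩ h
    have h1 : IntegrableOn (fun y => k * (q y * m y 1)) (Iic x) :=
      ((hi.mul_bdd (c := C) ((continuous_apply 1).comp hm).aestronglyMeasurable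
        (Eventually.of_forall fun y => (norm_le_pi_norm (m y) 1).trans (hC y))).const_mul
          k).integrableOn
    refine ((h.sub h1).const_mul (-2 * Complex.I)).congr (Eventually.of_forall fun y => ?_)
    simp only [Pi.sub_apply]
    linear_combination (-((‖q y‖ ^ 2 : ℝ) : ℂ) * m y 0) * Complex.I_mul_I
  have hc0 : Continuous fun _ : ℝ => (![1, 0] : Fin 2 → ℂ) := continuous_const
  constructor
  · refine ⟨hc0, ⟨_, fun x => le_rfl⟩, fun x => ?_⟩
    rw [integral_undef, add_zero]
    intro h
    simp only [jost_integrand] at h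
    have h0 := key _ x hc0 ⟨_, fun x => le_rfl⟩ (by simpa using! h.eval 0)
    refine hq2 x ?_
    refine h0.norm.congr (Eventually.of_forall fun y => ?_)
    simp
  · rintro m ⟨hm, hb, he⟩
    by_cases hx : ∃ x₀, IntegrableOn
      (fun y => (Dker (x₀ - y) k).mulVec ((DeltaX q y k).mulVec (m y))) (Iic x₀)
    · exfalso
      obtain ⟨x₀, h⟩ := hx
      simp only [jost_integrand] at h he
      have h0 := h.eval 0
      have h1 := h.eval 1
      simp only [Matrix.cons_val_zero, Matrix.cons_val_one, Matrix.cons_val_fin_one] at h0 h1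
      have hm0 : ∀ x ≤ x₀, m x 0 = 1 + ∫ y in Iic x, (k * (q y * m y 1) +
          Complex.I / 2 * ((‖q y‖ ^ 2 : ℝ) : ℂ) * m y 0) := by
        intro x hx
        rw [he x, Pi.add_apply, eval_integral]
        · simp
        · intro i
          fin_cases i
          · simpa using! IntegrableOn.mono_set h0 (Iic_subset_Iic.2 hx)
          · simp only [Fin.mk_one, Matrix.cons_val_one, Matrix.cons_val_fin_one]
            refine (IntegrableOn.mono_set (h1.const_mul
              (Complex.exp (2 * Complex.I * k ^ 2 * ((x - x₀ : ℝ) : ℂ))))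
              (Iic_subset_Iic.2 hx)).congr (Eventually.of_forall fun y => ?_)
            simp only
            rw [← mul_assoc, ← Complex.exp_add]
            congr 2; push_cast; ring
      have hlim : Tendsto (fun x => m x 0) atBot (𝓝 1) := by
        have h2 := (tendsto_integral_Iic_atBot h0).const_add 1
        rw [add_zero] at h2
        refine h2.congr' ?_
        filter_upwards [eventually_le_atBot x₀] with x hx
        exact (hm0 x hx).symm
      have hev : ∀ᶠ x in atBot, 1 / 2 < ‖m x 0‖ :=
        hlim.norm.eventually (lt_mem_nhds (by norm_num))
      obtain ⟨x₁, hx₁⟩ := eventually_atBot.1 (hev.and (eventually_le_atBot x₀))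
      have h3 := (key m x₀ hm hb h0).mono_set (Iic_subset_Iic.2 (hx₁ x₁ le_rfl).2)
      refine hq2 x₁ ((h3.norm.const_mul 2).mono' (by fun_prop) ?_)
      filter_upwards [ae_restrict_mem measurableSet_Iic] with y hy
      have h4 := (hx₁ y hy).1
      rw [norm_mul, Complex.norm_real]
      have h5 := norm_nonneg (‖q y‖ ^ 2)
      nlinarith
    · funext x
      rw [he x, integral_undef fun h => hx ⟨x, h⟩, add_zero]

end Jost

/-- For q ∈ L¹ continuous: (i) for each k with Im(k²) ≥ 0 the Volterra equation for the
modified first Jost column has a unique bounded continuous solution; (ii) for each fixed x,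
the solution is analytic in k on D⁺ = {Re k · Im k > 0} and continuous on D⁺ ∪ (ℝ ∪ iℝ). -/
theorem jost_column_existence_analyticity (q : ℝ → ℂ) (hqc : Continuous q)
    (hqL1 : MeasureTheory.Integrable q) :
    ∃ m : ℂ → ℝ → Fin 2 → ℂ,
      (∀ k : ℂ, 0 ≤ (k ^ 2).im →
        IsJostSol q k (m k) ∧ ∀ m' : ℝ → Fin 2 → ℂ, IsJostSol q k m' → m' = m k) ∧
      (∀ x : ℝ,
        AnalyticOnNhd ℂ (fun k => m k x) {k : ℂ | 0 < k.re * k.im} ∧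
        ContinuousOn (fun k => m k x)
          ({k : ℂ | 0 < k.re * k.im} ∪ ({k : ℂ | k.im = 0} ∪ {k : ℂ | k.re = 0}))) := by
  have him : ∀ k : ℂ, (k ^ 2).im = 2 * (k.re * k.im) := fun k => by
    rw [pow_two, Complex.mul_im]; ring
  by_cases h : IntegrableOn (fun y => ‖q y‖ ^ 2) (Iic 0)
  · have hq2 : ∀ x, IntegrableOn (fun y => ‖q y‖ ^ 2) (Iic x) := fun x => by
      have h1 : IntegrableOn (fun y => ‖q y‖ ^ 2) (Icc 0 x) :=
        (by fun_prop : Continuous fun y => ‖q y‖ ^ 2).integrableOn_Icc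
      refine (h.union h1).mono_set fun y hy => ?_
      rcases le_total y 0 with h2 | h2
      · exact Or.inl h2
      · exact Or.inr ⟨h2, hy⟩
    obtain ⟨m, hm, hreg⟩ := jost_exists hqc hqL1 hq2
    refine ⟨m, fun k hk => ⟨hm k hk, fun m' hm' => jost_unique hqc hqL1 hq2 hk (hm k hk) hm'⟩,
      fun x => ⟨?_, (hreg x).2.mono ?_⟩⟩
    · have hset : {k : ℂ | 0 < k.re * k.im} = {k : ℂ | 0 < (k ^ 2).im} := by
        ext k; simp only [mem_ofPred_eq, him]
        constructor <;> intro h <;> linarith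
      rw [hset]
      exact (hreg x).1.analyticOnNhd (isOpen_lt continuous_const (by fun_prop))
    · rintro k (hk | hk | hk) <;> simp only [mem_ofPred_eq] at hk <;>
        simp only [mem_ofPred_eq, him]
      · linarith
      · simp [hk]
      · simp [hk]
  · have hq2 : ∀ x, ¬ IntegrableOn (fun y => ‖q y‖ ^ 2) (Iic x) := fun x hx => by
      have h1 : IntegrableOn (fun y => ‖q y‖ ^ 2) (Icc x 0) :=
        (by fun_prop : Continuous fun y => ‖q y‖ ^ 2).integrableOn_Icc
      refine h ((hx.union h1).mono_set fun y hy => ?_)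
      rcases le_total y x with h2 | h2
      · exact Or.inl h2
      · exact Or.inr ⟨h2, hy⟩
    exact ⟨fun _ _ => ![1, 0], fun k _ => jost_of_not_integrable hqc hqL1 hq2 k,
      fun x => ⟨analyticOnNhd_const, continuousOn_const⟩⟩
end
end
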